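/- arXiv:1503.01748 — 3 statements merged into one kernel-verified Lean document; each statement's English description precedes it below -/
import Mathlib

section
/- Asymptotics of the characteristic functions in a sector (Lemma 2, equations (19)): Fix δ ∈ (0, π/2). Then, as |λ| → ∞ with arg λ ∈ [δ, π−δ]: 2i e^{iλT} Δ₁(λ) → h_{1,1} − i h_{1,2} and 2 e^{iλT} Δ₁₁(λ) → h_{1,1} − i h_{1,2}. -/
open MeasureTheory Set Filter

noncomputable section

/-- A function `f : ℝ → ℂ` is absolutely continuous on `[0, T]`:
it is the indefinite integral of an integrable function. -/
def AbsContOn (f : ℝ → ℂ) (T : ℝ) : Prop :=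
  ∃ g : ℝ → ℂ, IntervalIntegrable g volume 0 T ∧
    ∀ x ∈ Icc (0 : ℝ) T, f x = f 0 + ∫ t in (0 : ℝ)..x, g t

/-- `y : ℝ → ℂ × ℂ` is a solution of the Dirac system `B y' + Ω y = λ y` on `[0, T]`,
where `B = ![![0,1],![-1,0]]` and `Ω = ![![p,q],![q,-p]]`:  `y` is continuous on `[0,T]`
and satisfies the equivalent system of integral equations coming from
`y₁' = q y₁ - (p + λ) y₂`, `y₂' = (λ - p) y₁ - q y₂`
(this encodes: `y` is absolutely continuous and the ODE holds a.e.). -/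
def IsDiracSol (p q : ℝ → ℂ) (T : ℝ) (lam : ℂ) (y : ℝ → ℂ × ℂ) : Prop :=
  ContinuousOn y (Icc (0 : ℝ) T) ∧
    ∀ x ∈ Icc (0 : ℝ) T,
      ((y x).1 = (y 0).1 + ∫ t in (0 : ℝ)..x, (q t * (y t).1 - (p t + lam) * (y t).2)) ∧
      ((y x).2 = (y 0).2 + ∫ t in (0 : ℝ)..x, ((lam - p t) * (y t).1 - q t * (y t).2))

/-- A nonlocal linear form `U(y) = ∫_{[0,T]} y₁ dμ₁ + ∫_{[0,T]} y₂ dμ₂`, where the complex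
Borel measures `μᵢ` are encoded (via Radon–Nikodym) as integrable complex densities `wᵢ`
with respect to finite positive measures. -/
structure NonlocalForm (T : ℝ) where
  μ₁ : Measure ℝ
  μ₂ : Measure ℝ
  finite₁ : IsFiniteMeasure μ₁
  finite₂ : IsFiniteMeasure μ₂
  w₁ : ℝ → ℂ
  w₂ : ℝ → ℂ
  int₁ : Integrable w₁ μ₁
  int₂ : Integrable w₂ μ₂

namespace NonlocalForm

variable {T : ℝ}

/-- The value `U(y)` of the nonlocal form on a function `y`. -/
def app (U : NonlocalForm T) (y : ℝ → ℂ × ℂ) : ℂ :=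
  (∫ t in Icc (0 : ℝ) T, U.w₁ t * (y t).1 ∂U.μ₁) +
    ∫ t in Icc (0 : ℝ) T, U.w₂ t * (y t).2 ∂U.μ₂

/-- `h₁ = μ₁({0})`, the mass of the first complex measure at `0`. -/
def h₁ (U : NonlocalForm T) : ℂ := U.w₁ 0 * ((U.μ₁ {0}).toReal : ℂ)

/-- `h₂ = μ₂({0})`, the mass of the second complex measure at `0`. -/
def h₂ (U : NonlocalForm T) : ℂ := U.w₂ 0 * ((U.μ₂ {0}).toReal : ℂ)

end NonlocalForm

/-- A two-point (local) linear form `y ↦ c₁ y₁(t) + c₂ y₂(t)`. -/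
def locForm (c₁ c₂ : ℂ) (t : ℝ) (y : ℝ → ℂ × ℂ) : ℂ := c₁ * (y t).1 + c₂ * (y t).2

/-- `f` and `g` have the same order of zero at `z` (order possibly `0` or `∞`):
for every `n`, the first `n` derivatives of `f` vanish at `z` iff
the first `n` derivatives of `g` do. -/
def ZeroOrderEq (f g : ℂ → ℂ) (z : ℂ) : Prop :=
  ∀ n : ℕ, (∀ k < n, iteratedDeriv k f z = 0) ↔ (∀ k < n, iteratedDeriv k g z = 0)

/-- The filter of `λ → ∞` within the sector `arg λ ∈ [δ, π - δ]`. -/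
def sectorFilter (δ : ℝ) : Filter ℂ :=
  Filter.comap (fun lam : ℂ => ‖lam‖) Filter.atTop ⊓
    Filter.principal {lam : ℂ | Complex.arg lam ∈ Icc δ (Real.pi - δ)}

/-!
The combinations `y₁ ± i y₂` diagonalise `B y' = λ y`. Multiplied by `exp (iλ(T - x))` they solve a
slow-fast system: the slow one is constant up to its coupling with the fast one, and the fast one,
integrated backwards from `T`, is damped at rate `2 im λ`. Damping makes the `L¹` norm of an
integrable function vanish as `im λ → ∞`, so a solution with value `(d, e)` at `T` satisfies
`exp (iλT) y(x) ≈ exp (iλx) (d + i e) / 2 · (1, -i)` for `x < T`. Each characteristic function is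
`U₁` applied to one solution, which by constancy of the Wronskian has the value `(0, -1)`,
respectively `(1, 0)`, at `T`. The factor `exp (iλx)` leaves only the masses at `x = 0`.
-/

section Primitive

variable {E : Type*} [NormedAddCommGroup E] [NormedSpace ℝ E] {a b : ℝ}

/-- `f` is a primitive on `uIcc a b` of the integrable function `f'`, i.e. `f` is absolutely
continuous there with `f'` as a.e. derivative. The integral form is the one in which `AbsContOn`
and `IsDiracSol` are stated. -/
def IsPrimitiveOn (f f' : ℝ → E) (a b : ℝ) : Prop :=
  IntervalIntegrable f' volume a b ∧ ∀ x ∈ uIcc a b, f x = f a + ∫ t in a..x, f' t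

theorem absolutelyContinuousOnInterval_integral {f : ℝ → E}
    (hf : IntervalIntegrable f volume a b) :
    AbsolutelyContinuousOnInterval (fun x => ∫ t in a..x, f t) a b := by
  have hnorm := hf.norm.absolutelyContinuousOnInterval_intervalIntegral (c := a) left_mem_uIcc
  refine squeeze_zero' (.of_forall fun _ => Finset.sum_nonneg fun _ _ => dist_nonneg) ?_ hnorm
  filter_upwards [mem_inf_of_right (mem_principal_self _)] with I hI
  refine Finset.sum_le_sum fun i hi => ?_
  have hint : ∀ x ∈ uIcc a b, IntervalIntegrable f volume a x := fun x hx =>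
    hf.mono_set (uIcc_subset_uIcc_left hx)
  obtain ⟨hl, hr⟩ := hI.1 i hi
  rw [dist_eq_norm, Real.dist_eq, intervalIntegral.integral_interval_sub_left (hint _ hl)
    (hint _ hr), intervalIntegral.integral_interval_sub_left (hint _ hl).norm (hint _ hr).norm]
  exact intervalIntegral.norm_integral_le_abs_integral_norm

namespace IsPrimitiveOn

variable {f f' g g' : ℝ → E}

theorem congr (h : IsPrimitiveOn f f' a b) (hfg : EqOn f g (uIcc a b))
    (hfg' : EqOn f' g' (uIcc a b)) : IsPrimitiveOn g g' a b := by
  refine ⟨h.1.congr fun x hx => hfg' (uIoc_subset_uIcc hx), fun x hx => ?_⟩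
  rw [← hfg hx, ← hfg left_mem_uIcc, h.2 x hx]
  congr 1
  exact intervalIntegral.integral_congr fun t ht => hfg' (uIcc_subset_uIcc_left hx ht)

theorem congr_deriv (h : IsPrimitiveOn f f' a b) (hfg : ∀ x, f' x = g' x) :
    IsPrimitiveOn f g' a b :=
  h.congr (fun _ _ => rfl) fun x _ => hfg x

theorem continuousOn (h : IsPrimitiveOn f f' a b) : ContinuousOn f (uIcc a b) :=
  (continuousOn_const.add
    (intervalIntegral.continuousOn_primitive_interval' h.1 left_mem_uIcc)).congr h.2

theorem integral_eq_sub (h : IsPrimitiveOn f f' a b) {x y : ℝ} (hx : x ∈ uIcc a b)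
    (hy : y ∈ uIcc a b) : ∫ t in x..y, f' t = f y - f x := by
  rw [h.2 x hx, h.2 y hy, add_sub_add_left_eq_sub, intervalIntegral.integral_interval_sub_left
    (h.1.mono_set (uIcc_subset_uIcc_left hy)) (h.1.mono_set (uIcc_subset_uIcc_left hx))]

theorem add (hf : IsPrimitiveOn f f' a b) (hg : IsPrimitiveOn g g' a b) :
    IsPrimitiveOn (fun x => f x + g x) (fun x => f' x + g' x) a b := by
  refine ⟨hf.1.add hg.1, fun x hx => ?_⟩
  simp only [hf.2 x hx, hg.2 x hx]
  rw [intervalIntegral.integral_add (hf.1.mono_set (uIcc_subset_uIcc_left hx))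
    (hg.1.mono_set (uIcc_subset_uIcc_left hx))]
  abel

theorem of_ae_hasDerivAt [CompleteSpace E] (hac : AbsolutelyContinuousOnInterval f a b)
    (hint : IntervalIntegrable f' volume a b)
    (hderiv : ∀ᵐ x, x ∈ uIcc a b → HasDerivAt f (f' x) x) : IsPrimitiveOn f f' a b := by
  have hzero : ∀ᵐ x, x ∈ uIcc a b → HasDerivAt (f - fun x => ∫ t in a..x, f' t) 0 x := by
    filter_upwards [hderiv, hint.ae_hasDerivAt_integral] with x hf hF hx
    simpa using (hf hx).sub (hF hx a left_mem_uIcc)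
  obtain ⟨c, hc⟩ :=
    (hac.sub (absolutelyContinuousOnInterval_integral hint)).const_of_ae_hasDerivAt_zero hzero
  have ha : f a = c := by simpa using hc a left_mem_uIcc
  refine ⟨hint, fun x hx => ?_⟩
  rw [ha]
  exact sub_eq_iff_eq_add.1 (hc x hx)

theorem of_hasDerivAt [CompleteSpace E] (hderiv : ∀ x, HasDerivAt f (f' x) x)
    (hcont : Continuous f') : IsPrimitiveOn f f' a b := by
  refine ⟨hcont.intervalIntegrable a b, fun x _ => ?_⟩
  rw [intervalIntegral.integral_eq_sub_of_hasDerivAt (fun t _ => hderiv t)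
    (hcont.intervalIntegrable a x)]
  abel

section Algebra

variable {𝕜 : Type*} [RCLike 𝕜] {f f' g g' : ℝ → 𝕜}

theorem mul (hf : IsPrimitiveOn f f' a b) (hg : IsPrimitiveOn g g' a b) :
    IsPrimitiveOn (fun x => f x * g x) (fun x => f' x * g x + f x * g' x) a b := by
  set F : ℝ → 𝕜 := fun x => f a + ∫ t in a..x, f' t
  set G : ℝ → 𝕜 := fun x => g a + ∫ t in a..x, g' t
  have hF : AbsolutelyContinuousOnInterval F a b :=
    contDiffOn_const.absolutelyContinuousOnInterval.add
      (absolutelyContinuousOnInterval_integral hf.1)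
  have hG : AbsolutelyContinuousOnInterval G a b :=
    contDiffOn_const.absolutelyContinuousOnInterval.add
      (absolutelyContinuousOnInterval_integral hg.1)
  have hFG : IsPrimitiveOn (fun x => F x * G x) (fun x => f' x * G x + F x * g' x) a b := by
    refine of_ae_hasDerivAt (hF.fun_smul hG)
      ((hf.1.mul_continuousOn hG.continuousOn).add (hg.1.continuousOn_mul hF.continuousOn)) ?_
    filter_upwards [hf.1.ae_hasDerivAt_integral, hg.1.ae_hasDerivAt_integral] with x hf hg hx
    exact ((hf hx a left_mem_uIcc).const_add _).mul ((hg hx a left_mem_uIcc).const_add _)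
  refine hFG.congr (fun x hx => ?_) fun x hx => ?_
  · simp only [F, G, ← hf.2 x hx, ← hg.2 x hx]
  · simp only [F, G, ← hf.2 x hx, ← hg.2 x hx]

theorem const_mul (c : 𝕜) (hf : IsPrimitiveOn f f' a b) :
    IsPrimitiveOn (fun x => c * f x) (fun x => c * f' x) a b := by
  refine ⟨hf.1.const_mul c, fun x hx => ?_⟩
  simp only [hf.2 x hx, intervalIntegral.integral_const_mul, mul_add]

theorem sub (hf : IsPrimitiveOn f f' a b) (hg : IsPrimitiveOn g g' a b) :
    IsPrimitiveOn (fun x => f x - g x) (fun x => f' x - g' x) a b := by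
  simpa only [neg_one_mul, sub_eq_add_neg] using hf.add (hg.const_mul (-1))

end Algebra

end IsPrimitiveOn

end Primitive

section DampedTail

variable {E : Type*} [NormedAddCommGroup E] {b : ℝ → E} {T t : ℝ}

/-- The mass of `b` on `[t, T]`, damped at the exponential rate `κ` away from `t`. It controls the
Duhamel term of `V' = ω V + b U` integrated backwards from `T`, with `κ = re ω`. -/
def dampedTail (b : ℝ → E) (T κ t : ℝ) : ℝ :=
  ∫ s in t..T, Real.exp (-(κ * (s - t))) * ‖b s‖

theorem exp_neg_mul_le_one {κ x : ℝ} (hκ : 0 ≤ κ) (hx : 0 ≤ x) : Real.exp (-(κ * x)) ≤ 1 :=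
  Real.exp_le_one_iff.2 (neg_nonpos.2 (mul_nonneg hκ hx))

theorem tendsto_exp_neg_mul_atTop {x : ℝ} (hx : 0 < x) :
    Tendsto (fun κ : ℝ => Real.exp (-(κ * x))) atTop (nhds 0) :=
  Real.tendsto_exp_neg_atTop_nhds_zero.comp (tendsto_id.atTop_mul_const hx)

theorem intervalIntegrable_right_of_mem_Icc (hb : IntervalIntegrable b volume 0 T)
    (ht : t ∈ Icc 0 T) :
    IntervalIntegrable b volume t T :=
  hb.mono_set (by
    rw [uIcc_of_le ht.2, uIcc_of_le (ht.1.trans ht.2)]; exact Icc_subset_Icc_left ht.1)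

theorem dampedTail_nonneg (κ : ℝ) (ht : t ≤ T) : 0 ≤ dampedTail b T κ t :=
  intervalIntegral.integral_nonneg ht fun _ _ => by positivity

theorem dampedTail_le (hb : IntervalIntegrable b volume 0 T) {κ : ℝ} (hκ : 0 ≤ κ)
    (ht : t ∈ Icc 0 T) : dampedTail b T κ t ≤ ∫ s in 0..T, ‖b s‖ := by
  have hbt := intervalIntegrable_right_of_mem_Icc hb ht
  calc dampedTail b T κ t ≤ ∫ s in t..T, ‖b s‖ :=
        intervalIntegral.integral_mono_on ht.2
          (hbt.norm.continuousOn_mul (by fun_prop)) hbt.norm fun s hs =>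
            mul_le_of_le_one_left (norm_nonneg _)
              (exp_neg_mul_le_one hκ (sub_nonneg.2 hs.1))
    _ ≤ ∫ s in 0..T, ‖b s‖ :=
        intervalIntegral.integral_mono_interval ht.1 ht.2 le_rfl
          (.of_forall fun _ => norm_nonneg _) hb.norm

theorem continuousOn_dampedTail (hb : IntervalIntegrable b volume 0 T) (hT : 0 ≤ T) (κ : ℝ) :
    ContinuousOn (dampedTail b T κ) (Icc 0 T) := by
  have hfactor : ∀ t, dampedTail b T κ t =
      Real.exp (κ * t) * ∫ s in t..T, Real.exp (-(κ * s)) * ‖b s‖ := fun t => by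
    rw [dampedTail, ← intervalIntegral.integral_const_mul]
    refine intervalIntegral.integral_congr fun s _ => ?_
    simp only [← mul_assoc, ← Real.exp_add]
    ring_nf
  have hint : IntervalIntegrable (fun s => Real.exp (-(κ * s)) * ‖b s‖) volume 0 T :=
    hb.norm.continuousOn_mul (by fun_prop)
  rw [funext hfactor, ← uIcc_of_le hT]
  exact ContinuousOn.mul (by fun_prop)
    (intervalIntegral.continuousOn_primitive_interval_left
      ((intervalIntegrable_iff' enorm_ne_top).1 hint))

theorem tendsto_dampedTail (hb : IntervalIntegrable b volume 0 T) (ht : t ∈ Icc 0 T) :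
    Tendsto (fun κ => dampedTail b T κ t) atTop (nhds 0) := by
  have hbt := intervalIntegrable_right_of_mem_Icc hb ht
  have hlim : Tendsto (fun κ => dampedTail b T κ t) atTop (nhds (∫ _ in t..T, (0 : ℝ))) := by
    refine intervalIntegral.tendsto_integral_filter_of_dominated_convergence (fun s => ‖b s‖)
      (.of_forall fun κ => ?_) ?_ hbt.norm (.of_forall fun s hs => ?_)
    · exact (hbt.norm.continuousOn_mul (by fun_prop)).aestronglyMeasurable_restrict_uIoc
    · filter_upwards [eventually_ge_atTop 0] with κ hκ
      refine .of_forall fun s hs => ?_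
      rw [uIoc_of_le ht.2] at hs
      rw [Real.norm_of_nonneg (by positivity)]
      exact mul_le_of_le_one_left (norm_nonneg _) (exp_neg_mul_le_one hκ (sub_nonneg.2 hs.1.le))
    · rw [uIoc_of_le ht.2] at hs
      simpa using (tendsto_exp_neg_mul_atTop (sub_pos.2 hs.1)).mul_const ‖b s‖
  simpa using hlim

theorem tendsto_integral_norm_mul_dampedTail {F : Type*} [NormedAddCommGroup F] {a : ℝ → F}
    (ha : IntervalIntegrable a volume 0 T) (hb : IntervalIntegrable b volume 0 T) (hT : 0 ≤ T) :
    Tendsto (fun κ => ∫ t in 0..T, ‖a t‖ * dampedTail b T κ t) atTop (nhds 0) := by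
  have hlim : Tendsto (fun κ => ∫ t in 0..T, ‖a t‖ * dampedTail b T κ t) atTop
      (nhds (∫ _ in 0..T, (0 : ℝ))) := by
    refine intervalIntegral.tendsto_integral_filter_of_dominated_convergence
      (fun t => ‖a t‖ * ∫ s in 0..T, ‖b s‖) (.of_forall fun κ => ?_) ?_ (ha.norm.mul_const _)
      (.of_forall fun t ht => ?_)
    · exact (ha.norm.mul_continuousOn
        (by simpa [uIcc_of_le hT] using
          continuousOn_dampedTail hb hT κ)).aestronglyMeasurable_restrict_uIoc
    · filter_upwards [eventually_ge_atTop 0] with κ hκ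
      refine .of_forall fun t ht => ?_
      rw [uIoc_of_le hT] at ht
      have htail := dampedTail_nonneg (b := b) κ ht.2
      rw [Real.norm_of_nonneg (by positivity)]
      exact mul_le_mul_of_nonneg_left (dampedTail_le hb hκ (Ioc_subset_Icc_self ht))
        (norm_nonneg _)
    · rw [uIoc_of_le hT] at ht
      simpa using (tendsto_dampedTail hb (Ioc_subset_Icc_self ht)).const_mul ‖a t‖
  simpa using hlim

end DampedTail

section SlowFast

variable {a b : ℝ → ℂ} {T : ℝ}

/-- The slow-fast system `U' = a V`, `V' = ω V + b U` on `[0, T]`, to which the Dirac system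
reduces with `ω = -2iλ`: for large `re ω` the component `V` decays away from `T`, while `U` stays
almost constant. -/
structure IsSlowFastSol (a b : ℝ → ℂ) (T : ℝ) (ω : ℂ) (U V : ℝ → ℂ) : Prop where
  slow : IsPrimitiveOn U (fun t => a t * V t) 0 T
  fast : IsPrimitiveOn V (fun t => ω * V t + b t * U t) 0 T

theorem hasDerivAt_cexp_ofReal_sub_mul (μ : ℂ) (t x : ℝ) :
    HasDerivAt (fun x : ℝ => Complex.exp (μ * (x - t))) (μ * Complex.exp (μ * (x - t))) x := by
  have hlin : HasDerivAt (fun x : ℝ => μ * ((x : ℂ) - t)) μ x := by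
    simpa using ((Complex.ofRealCLM.hasDerivAt (x := x)).sub_const (t : ℂ)).const_mul μ
  simpa only [mul_comm μ (Complex.exp _)] using hlin.cexp

theorem isPrimitiveOn_cexp (μ : ℂ) (t a b : ℝ) :
    IsPrimitiveOn (fun x : ℝ => Complex.exp (μ * (x - t)))
      (fun x : ℝ => μ * Complex.exp (μ * (x - t))) a b :=
  .of_hasDerivAt (hasDerivAt_cexp_ofReal_sub_mul μ t) (by fun_prop)

theorem norm_cexp_mul_ofReal (μ : ℂ) (x : ℝ) :
    ‖Complex.exp (μ * x)‖ = Real.exp (μ.re * x) := by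
  rw [Complex.norm_exp, Complex.re_mul_ofReal]

namespace IsSlowFastSol

variable {ω : ℂ} {U V : ℝ → ℂ}

theorem continuousOn_slow (h : IsSlowFastSol a b T ω U V) (hT : 0 ≤ T) :
    ContinuousOn U (Icc 0 T) :=
  uIcc_of_le hT ▸ h.slow.continuousOn

theorem fast_eq_duhamel (h : IsSlowFastSol a b T ω U V) {t : ℝ} (ht : t ∈ Icc 0 T) :
    V t = Complex.exp (-ω * (T - t)) * V T -
      ∫ s in t..T, Complex.exp (-ω * (s - t)) * (b s * U s) := by
  have hprim : IsPrimitiveOn (fun s : ℝ => Complex.exp (-ω * (s - t)) * V s)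
      (fun s : ℝ => Complex.exp (-ω * (s - t)) * (b s * U s)) 0 T :=
    ((isPrimitiveOn_cexp (-ω) t 0 T).mul h.fast).congr_deriv fun s => by ring
  rw [hprim.integral_eq_sub (Icc_subset_uIcc ht) right_mem_uIcc]
  simp

theorem norm_fast_le (h : IsSlowFastSol a b T ω U V) (hb : IntervalIntegrable b volume 0 T)
    {M : ℝ} (hM : ∀ t ∈ Icc 0 T, ‖U t‖ ≤ M) {t : ℝ} (ht : t ∈ Icc 0 T) :
    ‖V t‖ ≤ Real.exp (-(ω.re * (T - t))) * ‖V T‖ + M * dampedTail b T ω.re t := by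
  have hexp : ∀ s : ℝ, ‖Complex.exp (-ω * (s - t))‖ = Real.exp (-(ω.re * (s - t))) := fun s => by
    rw [← Complex.ofReal_sub, norm_cexp_mul_ofReal, Complex.neg_re, neg_mul]
  have hbt := intervalIntegrable_right_of_mem_Icc hb ht
  have hduhamel : ‖∫ s in t..T, Complex.exp (-ω * (s - t)) * (b s * U s)‖ ≤
      ∫ s in t..T, M * (Real.exp (-(ω.re * (s - t))) * ‖b s‖) := by
    refine intervalIntegral.norm_integral_le_of_norm_le ht.2 (.of_forall fun s hs => ?_)
      ((hbt.norm.continuousOn_mul (by fun_prop)).const_mul M)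
    calc ‖Complex.exp (-ω * (s - t)) * (b s * U s)‖
        = ‖U s‖ * (Real.exp (-(ω.re * (s - t))) * ‖b s‖) := by
          rw [norm_mul, norm_mul, hexp]; ring
      _ ≤ M * (Real.exp (-(ω.re * (s - t))) * ‖b s‖) := by
          gcongr
          exact hM s ⟨ht.1.trans hs.1.le, hs.2⟩
  rw [intervalIntegral.integral_const_mul] at hduhamel
  rw [h.fast_eq_duhamel ht, dampedTail, ← hexp, ← norm_mul]
  exact (norm_sub_le _ _).trans (add_le_add_right hduhamel _)

theorem norm_fast_le_of_re_nonneg (h : IsSlowFastSol a b T ω U V)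
    (hb : IntervalIntegrable b volume 0 T) (hω : 0 ≤ ω.re) {M : ℝ}
    (hM : ∀ t ∈ Icc 0 T, ‖U t‖ ≤ M) {t : ℝ} (ht : t ∈ Icc 0 T) :
    ‖V t‖ ≤ ‖V T‖ + M * ∫ s in 0..T, ‖b s‖ := by
  have hM0 : 0 ≤ M := (norm_nonneg _).trans (hM t ht)
  refine (h.norm_fast_le hb hM ht).trans (add_le_add ?_ ?_)
  · exact mul_le_of_le_one_left (norm_nonneg _) (exp_neg_mul_le_one hω (sub_nonneg.2 ht.2))
  · exact mul_le_mul_of_nonneg_left (dampedTail_le hb hω ht) hM0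

theorem norm_slow_le (h : IsSlowFastSol a b T ω U V) (ha : IntervalIntegrable a volume 0 T)
    (hb : IntervalIntegrable b volume 0 T) (hω : 0 ≤ ω.re) {M : ℝ}
    (hM : ∀ t ∈ Icc 0 T, ‖U t‖ ≤ M) {t : ℝ} (ht : t ∈ Icc 0 T) :
    ‖U t‖ ≤ ‖U T‖ + ‖V T‖ * (∫ s in 0..T, ‖a s‖) +
      M * ∫ s in 0..T, ‖a s‖ * dampedTail b T ω.re s := by
  have hT : 0 ≤ T := ht.1.trans ht.2
  have htail : IntervalIntegrable (fun s => ‖a s‖ * dampedTail b T ω.re s) volume 0 T :=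
    ha.norm.mul_continuousOn (uIcc_of_le hT ▸ continuousOn_dampedTail hb hT ω.re)
  set B : ℝ → ℝ := fun s => ‖V T‖ * ‖a s‖ + M * (‖a s‖ * dampedTail b T ω.re s)
  have hB : IntervalIntegrable B volume 0 T := (ha.norm.const_mul _).add (htail.const_mul _)
  have hB0 : ∀ s ∈ Icc 0 T, ‖a s * V s‖ ≤ B s := fun s hs => by
    have hdamp : Real.exp (-(ω.re * (T - s))) * ‖V T‖ ≤ ‖V T‖ :=
      mul_le_of_le_one_left (norm_nonneg _) (exp_neg_mul_le_one hω (sub_nonneg.2 hs.2))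
    calc ‖a s * V s‖ = ‖a s‖ * ‖V s‖ := norm_mul _ _
      _ ≤ ‖a s‖ * (‖V T‖ + M * dampedTail b T ω.re s) := by
          gcongr
          exact (h.norm_fast_le hb hM hs).trans (by gcongr)
      _ = B s := by ring
  have hdiff : ‖U T - U t‖ ≤ ∫ s in 0..T, B s := by
    rw [← h.slow.integral_eq_sub (Icc_subset_uIcc ht) right_mem_uIcc]
    calc ‖∫ s in t..T, a s * V s‖ ≤ ∫ s in t..T, B s :=
          intervalIntegral.norm_integral_le_of_norm_le ht.2
            (.of_forall fun s hs => hB0 s ⟨ht.1.trans hs.1.le, hs.2⟩)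
            (intervalIntegrable_right_of_mem_Icc hB ht)
      _ ≤ ∫ s in 0..T, B s :=
          intervalIntegral.integral_mono_interval ht.1 ht.2 le_rfl
            ((ae_restrict_mem measurableSet_Ioc).mono fun s hs =>
              (norm_nonneg _).trans (hB0 s (Ioc_subset_Icc_self hs))) hB
  rw [intervalIntegral.integral_add (ha.norm.const_mul _) (htail.const_mul _),
    intervalIntegral.integral_const_mul, intervalIntegral.integral_const_mul] at hdiff
  have htri : ‖U t‖ ≤ ‖U T‖ + ‖U T - U t‖ := by
    simpa only [sub_sub_cancel] using norm_sub_le (U T) (U T - U t)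
  linarith

-- At a maximum of `‖U‖` the last term of `norm_slow_le` is absorbed into the left-hand side.
theorem norm_slow_le_of_integral_le_half (h : IsSlowFastSol a b T ω U V)
    (ha : IntervalIntegrable a volume 0 T) (hb : IntervalIntegrable b volume 0 T)
    (hω : 0 ≤ ω.re) (hhalf : ∫ s in 0..T, ‖a s‖ * dampedTail b T ω.re s ≤ 1 / 2)
    {t : ℝ} (ht : t ∈ Icc 0 T) :
    ‖U t‖ ≤ 2 * (‖U T‖ + ‖V T‖ * ∫ s in 0..T, ‖a s‖) := by
  obtain ⟨m, hm, hmax⟩ :=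
    isCompact_Icc.exists_isMaxOn ⟨t, ht⟩ (h.continuousOn_slow (ht.1.trans ht.2)).norm
  have hself := h.norm_slow_le ha hb hω (fun s hs => hmax hs) hm
  have htm : ‖U t‖ ≤ ‖U m‖ := hmax ht
  have hcontr := mul_le_mul_of_nonneg_left hhalf (norm_nonneg (U m))
  linarith

end IsSlowFastSol

section Family

variable {ι : Type*} {l : Filter ι} {ω : ι → ℂ} {U V : ι → ℝ → ℂ} {u v : ℂ}

theorem exists_eventually_norm_le_of_isSlowFastSol
    (h : ∀ i, IsSlowFastSol a b T (ω i) (U i) (V i))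
    (ha : IntervalIntegrable a volume 0 T) (hb : IntervalIntegrable b volume 0 T) (hT : 0 ≤ T)
    (hω : Tendsto (fun i => (ω i).re) l atTop) (hU : ∀ i, U i T = u) (hV : ∀ i, V i T = v) :
    ∃ K, ∀ᶠ i in l, ∀ t ∈ Icc 0 T, ‖U i t‖ ≤ K ∧ ‖V i t‖ ≤ K := by
  set M : ℝ := 2 * (‖u‖ + ‖v‖ * ∫ s in 0..T, ‖a s‖)
  have hhalf := ((tendsto_integral_norm_mul_dampedTail ha hb hT).comp hω).eventually_le_const
    (by norm_num : (0 : ℝ) < 1 / 2)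
  refine ⟨max M (‖v‖ + M * ∫ s in 0..T, ‖b s‖), ?_⟩
  filter_upwards [hhalf, hω.eventually_ge_atTop 0] with i hi hpos t ht
  have hslow : ∀ s ∈ Icc 0 T, ‖U i s‖ ≤ M := fun s hs => by
    simpa only [hU, hV] using (h i).norm_slow_le_of_integral_le_half ha hb hpos hi hs
  have hfast := (h i).norm_fast_le_of_re_nonneg hb hpos hslow ht
  rw [hV] at hfast
  exact ⟨(hslow t ht).trans (le_max_left _ _), hfast.trans (le_max_right _ _)⟩

theorem tendsto_fast_of_isSlowFastSol (h : ∀ i, IsSlowFastSol a b T (ω i) (U i) (V i))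
    (ha : IntervalIntegrable a volume 0 T) (hb : IntervalIntegrable b volume 0 T)
    (hω : Tendsto (fun i => (ω i).re) l atTop) (hU : ∀ i, U i T = u) (hV : ∀ i, V i T = v)
    {t : ℝ} (ht : t ∈ Ico 0 T) : Tendsto (fun i => V i t) l (nhds 0) := by
  obtain ⟨K, hK⟩ := exists_eventually_norm_le_of_isSlowFastSol h ha hb (ht.1.trans ht.2.le)
    hω hU hV
  have hbound : Tendsto (fun i => Real.exp (-((ω i).re * (T - t))) * ‖v‖ +
      K * dampedTail b T (ω i).re t) l (nhds 0) := by
    simpa using (((tendsto_exp_neg_mul_atTop (sub_pos.2 ht.2)).comp hω).mul_const ‖v‖).add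
      (((tendsto_dampedTail hb (Ico_subset_Icc_self ht)).comp hω).const_mul K)
  refine squeeze_zero_norm' ?_ hbound
  filter_upwards [hK] with i hi
  simpa only [hV] using
    (h i).norm_fast_le hb (fun s hs => (hi s hs).1) (Ico_subset_Icc_self ht)

theorem tendsto_slow_of_isSlowFastSol [l.IsCountablyGenerated]
    (h : ∀ i, IsSlowFastSol a b T (ω i) (U i) (V i))
    (ha : IntervalIntegrable a volume 0 T) (hb : IntervalIntegrable b volume 0 T)
    (hω : Tendsto (fun i => (ω i).re) l atTop) (hU : ∀ i, U i T = u) (hV : ∀ i, V i T = v)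
    {t : ℝ} (ht : t ∈ Icc 0 T) : Tendsto (fun i => U i t) l (nhds u) := by
  have hT : 0 ≤ T := ht.1.trans ht.2
  obtain ⟨K, hK⟩ := exists_eventually_norm_le_of_isSlowFastSol h ha hb hT hω hU hV
  have hint : Tendsto (fun i => ∫ s in t..T, a s * V i s) l (nhds (∫ _ in t..T, (0 : ℂ))) := by
    refine intervalIntegral.tendsto_integral_filter_of_dominated_convergence
      (fun s => ‖a s‖ * K) (.of_forall fun i => ?_) ?_
      ((intervalIntegrable_right_of_mem_Icc ha ht).norm.mul_const K) ?_
    · exact (intervalIntegrable_right_of_mem_Icc (h i).slow.1 ht).aestronglyMeasurable_restrict_uIoc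
    · filter_upwards [hK] with i hi
      refine .of_forall fun s hs => ?_
      rw [uIoc_of_le ht.2] at hs
      rw [norm_mul]
      exact mul_le_mul_of_nonneg_left (hi s ⟨ht.1.trans hs.1.le, hs.2⟩).2 (norm_nonneg _)
    · filter_upwards [Measure.ae_ne volume T] with s hsT hs
      rw [uIoc_of_le ht.2] at hs
      simpa using (tendsto_fast_of_isSlowFastSol h ha hb hω hU hV
        ⟨ht.1.trans hs.1.le, hs.2.lt_of_ne hsT⟩).const_mul (a s)
  have hU_eq : ∀ i, U i t = u - ∫ s in t..T, a s * V i s := fun i => by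
    rw [(h i).slow.integral_eq_sub (Icc_subset_uIcc ht) right_mem_uIcc, hU, sub_sub_cancel]
  simpa [hU_eq] using hint.const_sub u

end Family

end SlowFast

section Dirac

variable {p q : ℝ → ℂ} {T : ℝ} {lam : ℂ} {y z : ℝ → ℂ × ℂ}

theorem isDiracSol_iff_isPrimitiveOn (hT : 0 ≤ T) (hp : IntervalIntegrable p volume 0 T)
    (hq : IntervalIntegrable q volume 0 T) :
    IsDiracSol p q T lam y ↔
      IsPrimitiveOn (fun t => (y t).1) (fun t => q t * (y t).1 - (p t + lam) * (y t).2) 0 T ∧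
      IsPrimitiveOn (fun t => (y t).2) (fun t => (lam - p t) * (y t).1 - q t * (y t).2) 0 T := by
  rw [IsDiracSol, forall₂_and, ← uIcc_of_le hT]
  constructor
  · rintro ⟨hcont, h₁, h₂⟩
    exact ⟨⟨(hq.mul_continuousOn hcont.fst).sub
        ((hp.add intervalIntegrable_const).mul_continuousOn hcont.snd), h₁⟩,
      ⟨((intervalIntegrable_const.sub hp).mul_continuousOn hcont.fst).sub
        (hq.mul_continuousOn hcont.snd), h₂⟩⟩
  · rintro ⟨h₁, h₂⟩
    exact ⟨h₁.continuousOn.prodMk h₂.continuousOn, h₁.2, h₂.2⟩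

/-- The component `E(t) (y₁ + i y₂)`, `E(t) = exp (iλ(T - t))`, of a Dirac solution: it diagonalises
`B y' = λ y`, and `E` removes the oscillation of `y₁ + i y₂`, without changing the value at `T`. -/
def slowPart (T : ℝ) (lam : ℂ) (y : ℝ → ℂ × ℂ) (t : ℝ) : ℂ :=
  Complex.exp (-(Complex.I * lam) * (t - T)) * ((y t).1 + Complex.I * (y t).2)

/-- The companion `E(t) (y₁ - i y₂)` of `slowPart`, with the same factor `E`. -/
def fastPart (T : ℝ) (lam : ℂ) (y : ℝ → ℂ × ℂ) (t : ℝ) : ℂ :=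
  Complex.exp (-(Complex.I * lam) * (t - T)) * ((y t).1 - Complex.I * (y t).2)

theorem slowPart_right (T : ℝ) (lam : ℂ) (y : ℝ → ℂ × ℂ) :
    slowPart T lam y T = (y T).1 + Complex.I * (y T).2 := by
  simp [slowPart]

theorem fastPart_right (T : ℝ) (lam : ℂ) (y : ℝ → ℂ × ℂ) :
    fastPart T lam y T = (y T).1 - Complex.I * (y T).2 := by
  simp [fastPart]

theorem cexp_smul_eq_slowPart_fastPart (T : ℝ) (lam : ℂ) (y : ℝ → ℂ × ℂ) (t : ℝ) :
    Complex.exp (Complex.I * lam * T) • y t = (Complex.exp (Complex.I * lam * t) / 2) •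
      (slowPart T lam y t + fastPart T lam y t,
        -Complex.I * (slowPart T lam y t - fastPart T lam y t)) := by
  have hexp : Complex.exp (Complex.I * lam * T) = Complex.exp (Complex.I * lam * t) *
      Complex.exp (-(Complex.I * lam) * (t - T)) := by
    rw [← Complex.exp_add]; ring_nf
  ext
  · simp only [Prod.smul_fst, smul_eq_mul, slowPart, fastPart, hexp]
    ring
  · simp only [Prod.smul_snd, smul_eq_mul, slowPart, fastPart, hexp]
    linear_combination (Complex.exp (Complex.I * lam * t) *
      Complex.exp (-(Complex.I * lam) * (t - T)) * (y t).2) * Complex.I_sq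

theorem norm_cexp_smul_le_of_norm_slowPart_le {t K : ℝ} (hslow : ‖slowPart T lam y t‖ ≤ K)
    (hfast : ‖fastPart T lam y t‖ ≤ K) :
    ‖Complex.exp (Complex.I * lam * T) • y t‖ ≤ Real.exp (-(lam.im * t)) * K := by
  have hre : (Complex.I * lam).re * t = -(lam.im * t) := by
    rw [Complex.I_mul_re, neg_mul]
  have hpair : ‖(slowPart T lam y t + fastPart T lam y t,
      -Complex.I * (slowPart T lam y t - fastPart T lam y t))‖ ≤ K + K := by
    refine norm_prod_le_iff.2 ⟨(norm_add_le _ _).trans (add_le_add hslow hfast), ?_⟩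
    simpa using (norm_sub_le _ _).trans (add_le_add hslow hfast)
  rw [cexp_smul_eq_slowPart_fastPart, norm_smul, norm_div, norm_cexp_mul_ofReal, hre,
    Complex.norm_two]
  calc _ ≤ Real.exp (-(lam.im * t)) / 2 * (K + K) := by gcongr
    _ = Real.exp (-(lam.im * t)) * K := by ring

namespace IsDiracSol

theorem smul_sub_smul (hT : 0 ≤ T) (hp : IntervalIntegrable p volume 0 T)
    (hq : IntervalIntegrable q volume 0 T) (hy : IsDiracSol p q T lam y)
    (hz : IsDiracSol p q T lam z) (c d : ℂ) :
    IsDiracSol p q T lam (fun t => c • y t - d • z t) := by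
  rw [isDiracSol_iff_isPrimitiveOn hT hp hq] at hy hz ⊢
  refine ⟨((hy.1.const_mul c).sub (hz.1.const_mul d)).congr_deriv fun t => ?_,
    ((hy.2.const_mul c).sub (hz.2.const_mul d)).congr_deriv fun t => ?_⟩ <;>
  · simp only [Prod.fst_sub, Prod.snd_sub, Prod.smul_fst, Prod.smul_snd, smul_eq_mul]
    ring

theorem wronskian_eq (hT : 0 ≤ T) (hp : IntervalIntegrable p volume 0 T)
    (hq : IntervalIntegrable q volume 0 T) (hy : IsDiracSol p q T lam y)
    (hz : IsDiracSol p q T lam z) {x : ℝ} (hx : x ∈ Icc 0 T) :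
    (y x).1 * (z x).2 - (y x).2 * (z x).1 = (y 0).1 * (z 0).2 - (y 0).2 * (z 0).1 := by
  rw [isDiracSol_iff_isPrimitiveOn hT hp hq] at hy hz
  have hprim : IsPrimitiveOn (fun t => (y t).1 * (z t).2 - (y t).2 * (z t).1) (fun _ => 0) 0 T :=
    ((hy.1.mul hz.2).sub (hy.2.mul hz.1)).congr_deriv fun t => by ring
  simpa using hprim.2 x (Icc_subset_uIcc hx)

theorem isSlowFastSol (hT : 0 ≤ T) (hp : IntervalIntegrable p volume 0 T)
    (hq : IntervalIntegrable q volume 0 T) (hy : IsDiracSol p q T lam y) :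
    IsSlowFastSol (fun t => q t - Complex.I * p t) (fun t => q t + Complex.I * p t) T
      (-2 * Complex.I * lam) (slowPart T lam y) (fastPart T lam y) := by
  rw [isDiracSol_iff_isPrimitiveOn hT hp hq] at hy
  have hexp := isPrimitiveOn_cexp (-(Complex.I * lam)) T 0 T
  constructor
  · refine (hexp.mul (hy.1.add (hy.2.const_mul Complex.I))).congr_deriv fun t => ?_
    simp only [fastPart]
    linear_combination -(Complex.exp (-(Complex.I * lam) * (t - T)) * (p t + lam) * (y t).2) *
      Complex.I_sq
  · refine (hexp.mul (hy.1.sub (hy.2.const_mul Complex.I))).congr_deriv fun t => ?_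
    simp only [slowPart, fastPart]
    linear_combination -(Complex.exp (-(Complex.I * lam) * (t - T)) * (p t + lam) * (y t).2) *
      Complex.I_sq

section Family

variable {ι : Type*} {l : Filter ι} {lam : ι → ℂ} {Y : ι → ℝ → ℂ × ℂ} {w : ℂ × ℂ}

theorem tendsto_re_neg_two_I_mul_atTop (hlam : Tendsto (fun i => (lam i).im) l atTop) :
    Tendsto (fun i => (-2 * Complex.I * lam i).re) l atTop := by
  simpa [mul_assoc] using hlam.const_mul_atTop two_pos

theorem exists_eventually_norm_cexp_smul_le (hT : 0 ≤ T) (hp : IntervalIntegrable p volume 0 T)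
    (hq : IntervalIntegrable q volume 0 T) (hlam : Tendsto (fun i => (lam i).im) l atTop)
    (hY : ∀ i, IsDiracSol p q T (lam i) (Y i)) (hw : ∀ i, Y i T = w) :
    ∃ K, ∀ᶠ i in l, ∀ t ∈ Icc 0 T,
      ‖Complex.exp (Complex.I * lam i * T) • Y i t‖ ≤ Real.exp (-((lam i).im * t)) * K := by
  obtain ⟨K, hK⟩ := exists_eventually_norm_le_of_isSlowFastSol
    (fun i => (hY i).isSlowFastSol hT hp hq) (hq.sub (hp.const_mul _)) (hq.add (hp.const_mul _))
    hT (tendsto_re_neg_two_I_mul_atTop hlam) (fun i => by rw [slowPart_right, hw])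
    (fun i => by rw [fastPart_right, hw])
  exact ⟨K, hK.mono fun i hi t ht => norm_cexp_smul_le_of_norm_slowPart_le (hi t ht).1 (hi t ht).2⟩

theorem tendsto_cexp_smul_of_mem_Ioc (hp : IntervalIntegrable p volume 0 T)
    (hq : IntervalIntegrable q volume 0 T) (hlam : Tendsto (fun i => (lam i).im) l atTop)
    (hY : ∀ i, IsDiracSol p q T (lam i) (Y i)) (hw : ∀ i, Y i T = w) {t : ℝ} (ht : t ∈ Ioc 0 T) :
    Tendsto (fun i => Complex.exp (Complex.I * lam i * T) • Y i t) l (nhds 0) := by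
  obtain ⟨K, hK⟩ :=
    exists_eventually_norm_cexp_smul_le (ht.1.le.trans ht.2) hp hq hlam hY hw
  refine squeeze_zero_norm' (hK.mono fun i hi => hi t (Ioc_subset_Icc_self ht)) ?_
  simpa using ((tendsto_exp_neg_mul_atTop ht.1).comp hlam).mul_const K

theorem tendsto_cexp_smul_apply_zero [l.IsCountablyGenerated] (hT : 0 < T)
    (hp : IntervalIntegrable p volume 0 T) (hq : IntervalIntegrable q volume 0 T)
    (hlam : Tendsto (fun i => (lam i).im) l atTop)
    (hY : ∀ i, IsDiracSol p q T (lam i) (Y i)) (hw : ∀ i, Y i T = w) :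
    Tendsto (fun i => Complex.exp (Complex.I * lam i * T) • Y i 0) l
      (nhds (((w.1 + Complex.I * w.2) / 2) • (1, -Complex.I))) := by
  have hsol := fun i => (hY i).isSlowFastSol hT.le hp hq
  have ha := hq.sub (hp.const_mul Complex.I)
  have hb := hq.add (hp.const_mul Complex.I)
  have hω := tendsto_re_neg_two_I_mul_atTop hlam
  have hslowT : ∀ i, slowPart T (lam i) (Y i) T = w.1 + Complex.I * w.2 := fun i => by
    rw [slowPart_right, hw]
  have hfastT : ∀ i, fastPart T (lam i) (Y i) T = w.1 - Complex.I * w.2 := fun i => by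
    rw [fastPart_right, hw]
  have hslow := tendsto_slow_of_isSlowFastSol hsol ha hb hω hslowT hfastT (left_mem_Icc.2 hT.le)
  have hfast := tendsto_fast_of_isSlowFastSol hsol ha hb hω hslowT hfastT (left_mem_Ico.2 hT)
  have hpair := ((hslow.add hfast).prodMk_nhds
    ((hslow.sub hfast).const_mul (-Complex.I))).const_smul (1 / 2 : ℂ)
  convert hpair using 2 with i
  · simp [cexp_smul_eq_slowPart_fastPart]
  · ext <;> simp only [Prod.smul_mk, smul_eq_mul] <;> ring

end Family

end IsDiracSol

end Dirac

namespace NonlocalForm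

section Limit

variable {ι : Type*} {l : Filter ι} [l.IsCountablyGenerated] {T K : ℝ}

theorem tendsto_setIntegral_mul_singleton_mass (hT : 0 ≤ T) {μ : Measure ℝ} {w : ℝ → ℂ}
    (hw : Integrable w μ) {f : ι → ℝ → ℂ} {c : ℂ} (hf : ∀ i, ContinuousOn (f i) (Icc 0 T))
    (hK : ∀ᶠ i in l, ∀ t ∈ Icc 0 T, ‖f i t‖ ≤ K) (hzero : Tendsto (fun i => f i 0) l (nhds c))
    (hpos : ∀ t ∈ Ioc 0 T, Tendsto (fun i => f i t) l (nhds 0)) :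
    Tendsto (fun i => ∫ t in Icc 0 T, w t * f i t ∂μ) l
      (nhds (w 0 * ((μ {0}).toReal : ℂ) * c)) := by
  have hlim : ∫ t in Icc 0 T, ({0} : Set ℝ).indicator (fun t => w t * c) t ∂μ =
      w 0 * ((μ {0}).toReal : ℂ) * c := by
    rw [setIntegral_indicator (measurableSet_singleton 0),
      inter_eq_self_of_subset_right (singleton_subset_iff.2 (left_mem_Icc.2 hT)),
      integral_singleton, Complex.real_smul, measureReal_def]
    ring
  rw [← hlim]
  refine tendsto_integral_filter_of_dominated_convergence (fun t => ‖w t‖ * K)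
    (.of_forall fun i => ?_) ?_ (hw.norm.mul_const K).restrict ?_
  · exact hw.aestronglyMeasurable.restrict.mul ((hf i).aestronglyMeasurable measurableSet_Icc)
  · filter_upwards [hK] with i hi
    filter_upwards [ae_restrict_mem measurableSet_Icc] with t ht
    rw [norm_mul]
    exact mul_le_mul_of_nonneg_left (hi t ht) (norm_nonneg _)
  · filter_upwards [ae_restrict_mem measurableSet_Icc] with t ht
    rcases ht.1.eq_or_lt with rfl | htpos
    · simpa using hzero.const_mul (w 0)
    · simpa [htpos.ne'] using (hpos t ⟨htpos, ht.2⟩).const_mul (w t)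

theorem tendsto_app (U : NonlocalForm T) (hT : 0 ≤ T) {F : ι → ℝ → ℂ × ℂ} {v : ℂ × ℂ}
    (hF : ∀ i, ContinuousOn (F i) (Icc 0 T)) (hK : ∀ᶠ i in l, ∀ t ∈ Icc 0 T, ‖F i t‖ ≤ K)
    (hzero : Tendsto (fun i => F i 0) l (nhds v))
    (hpos : ∀ t ∈ Ioc 0 T, Tendsto (fun i => F i t) l (nhds 0)) :
    Tendsto (fun i => U.app (F i)) l (nhds (U.h₁ * v.1 + U.h₂ * v.2)) :=
  (tendsto_setIntegral_mul_singleton_mass hT U.int₁ (fun i => (hF i).fst)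
    (hK.mono fun _ hi t ht => (norm_fst_le _).trans (hi t ht)) hzero.fst_nhds
    fun t ht => (hpos t ht).fst_nhds).add
  (tendsto_setIntegral_mul_singleton_mass hT U.int₂ (fun i => (hF i).snd)
    (hK.mono fun _ hi t ht => (norm_snd_le _).trans (hi t ht)) hzero.snd_nhds
    fun t ht => (hpos t ht).snd_nhds)

end Limit

section Linear

variable {T : ℝ} (U : NonlocalForm T) {y z : ℝ → ℂ × ℂ}

theorem app_smul (c : ℂ) (y : ℝ → ℂ × ℂ) : U.app (fun t => c • y t) = c * U.app y := by
  simp only [app, Prod.smul_fst, Prod.smul_snd, smul_eq_mul, mul_left_comm _ c,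
    integral_const_mul, mul_add]

theorem app_sub (hy : ContinuousOn y (Icc 0 T)) (hz : ContinuousOn z (Icc 0 T)) :
    U.app (fun t => y t - z t) = U.app y - U.app z := by
  simp only [app, Prod.fst_sub, Prod.snd_sub, mul_sub]
  rw [integral_sub (U.int₁.integrableOn.mul_continuousOn hy.fst isCompact_Icc)
      (U.int₁.integrableOn.mul_continuousOn hz.fst isCompact_Icc),
    integral_sub (U.int₂.integrableOn.mul_continuousOn hy.snd isCompact_Icc)
      (U.int₂.integrableOn.mul_continuousOn hz.snd isCompact_Icc)]
  ring

end Linear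

theorem tendsto_cexp_mul_app {ι : Type*} {l : Filter ι} [l.IsCountablyGenerated] {T : ℝ}
    (hT : 0 < T) {p q : ℝ → ℂ} (hp : IntervalIntegrable p volume 0 T)
    (hq : IntervalIntegrable q volume 0 T) (U : NonlocalForm T) {lam : ι → ℂ}
    (hlam : Tendsto (fun i => (lam i).im) l atTop) {Y : ι → ℝ → ℂ × ℂ} {w : ℂ × ℂ}
    (hY : ∀ i, IsDiracSol p q T (lam i) (Y i)) (hw : ∀ i, Y i T = w) :
    Tendsto (fun i => Complex.exp (Complex.I * lam i * T) * U.app (Y i)) l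
      (nhds ((w.1 + Complex.I * w.2) / 2 * (U.h₁ - Complex.I * U.h₂))) := by
  obtain ⟨K, hK⟩ := IsDiracSol.exists_eventually_norm_cexp_smul_le hT.le hp hq hlam hY hw
  have hbound : ∀ᶠ i in l, ∀ t ∈ Icc 0 T,
      ‖Complex.exp (Complex.I * lam i * T) • Y i t‖ ≤ K := by
    filter_upwards [hK, hlam.eventually_ge_atTop 0] with i hi him t ht
    have hK0 : 0 ≤ K := by
      simpa using (norm_nonneg _).trans (hi 0 (left_mem_Icc.2 hT.le))
    exact (hi t ht).trans (mul_le_of_le_one_left hK0 (exp_neg_mul_le_one him ht.1))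
  have happ := U.tendsto_app (F := fun i t => Complex.exp (Complex.I * lam i * T) • Y i t) hT.le
    (fun i => (hY i).1.const_smul (Complex.exp (Complex.I * lam i * T))) hbound
    (IsDiracSol.tendsto_cexp_smul_apply_zero hT hp hq hlam hY hw)
    fun t ht => IsDiracSol.tendsto_cexp_smul_of_mem_Ioc hp hq hlam hY hw ht
  have hvalue : U.h₁ * (((w.1 + Complex.I * w.2) / 2) • ((1 : ℂ), -Complex.I)).1 +
      U.h₂ * (((w.1 + Complex.I * w.2) / 2) • ((1 : ℂ), -Complex.I)).2 =
      (w.1 + Complex.I * w.2) / 2 * (U.h₁ - Complex.I * U.h₂) := by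
    simp only [Prod.smul_mk, smul_eq_mul]
    ring
  rw [hvalue] at happ
  simpa only [app_smul] using happ

theorem tendsto_cexp_mul_app_mul_sub {ι : Type*} {l : Filter ι} [l.IsCountablyGenerated] {T : ℝ}
    (hT : 0 < T) {p q : ℝ → ℂ} (hp : IntervalIntegrable p volume 0 T)
    (hq : IntervalIntegrable q volume 0 T) (U : NonlocalForm T) {lam : ι → ℂ}
    (hlam : Tendsto (fun i => (lam i).im) l atTop) {X Z : ι → ℝ → ℂ × ℂ} {c d : ι → ℂ} {w : ℂ × ℂ}
    (hX : ∀ i, IsDiracSol p q T (lam i) (X i)) (hZ : ∀ i, IsDiracSol p q T (lam i) (Z i))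
    (hw : ∀ i, c i • X i T - d i • Z i T = w) :
    Tendsto (fun i => Complex.exp (Complex.I * lam i * T) *
        (U.app (X i) * c i - U.app (Z i) * d i)) l
      (nhds ((w.1 + Complex.I * w.2) / 2 * (U.h₁ - Complex.I * U.h₂))) := by
  refine (U.tendsto_cexp_mul_app hT hp hq hlam
    (fun i => (hX i).smul_sub_smul hT.le hp hq (hZ i) (c i) (d i)) hw).congr fun i => ?_
  rw [U.app_sub (y := fun t => c i • X i t) (z := fun t => d i • Z i t) ((hX i).1.const_smul (c i))
    ((hZ i).1.const_smul (d i)), app_smul, app_smul, mul_comm (c i), mul_comm (d i)]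

end NonlocalForm

theorem AbsContOn.intervalIntegrable {f : ℝ → ℂ} {T : ℝ} (hf : AbsContOn f T) (hT : 0 ≤ T) :
    IntervalIntegrable f volume 0 T := by
  obtain ⟨g, hg, hfg⟩ := hf
  rw [← uIcc_of_le hT] at hfg
  exact IsPrimitiveOn.continuousOn ⟨hg, hfg⟩ |>.intervalIntegrable

theorem sin_le_sin_of_mem_Icc {δ θ : ℝ} (hδ : 0 ≤ δ) (hθ : θ ∈ Icc δ (Real.pi - δ)) :
    Real.sin δ ≤ Real.sin θ := by
  rcases le_total θ (Real.pi / 2) with h | h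
  · exact Real.sin_le_sin_of_le_of_le_pi_div_two (by linarith [Real.pi_pos]) h hθ.1
  · rw [← Real.sin_pi_sub θ]
    exact Real.sin_le_sin_of_le_of_le_pi_div_two (by linarith [Real.pi_pos]) (by linarith)
      (by linarith [hθ.2])

theorem sectorFilter_le_comap_im_atTop {δ : ℝ} (hδ : δ ∈ Ioo 0 Real.pi) :
    sectorFilter δ ≤ comap Complex.im atTop := by
  rw [← tendsto_iff_comap]
  have hnorm : Tendsto (fun lam : ℂ => ‖lam‖ * Real.sin δ) (sectorFilter δ) atTop :=
    Tendsto.atTop_mul_const (Real.sin_pos_of_mem_Ioo hδ) (tendsto_comap.mono_left inf_le_left)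
  refine tendsto_atTop_mono' _ ?_ hnorm
  filter_upwards [mem_inf_of_right (mem_principal_self _)] with lam hlam
  rw [← Complex.norm_mul_sin_arg lam]
  exact mul_le_mul_of_nonneg_left (sin_le_sin_of_mem_Icc hδ.1.le hlam) (norm_nonneg _)

theorem statement15_general
    (T : ℝ) (hT : 0 < T)
    (p q : ℝ → ℂ) (hp : IntervalIntegrable p volume 0 T) (hq : IntervalIntegrable q volume 0 T)
    (U₁ : NonlocalForm T)
    (X₁ X₂ : ℂ → ℝ → ℂ × ℂ)
    (hX₁ : ∀ lam, IsDiracSol p q T lam (X₁ lam) ∧ X₁ lam 0 = (1, 0))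
    (hX₂ : ∀ lam, IsDiracSol p q T lam (X₂ lam) ∧ X₂ lam 0 = (0, 1))
    (Δ₁ Δ₁₁ : ℂ → ℂ)
    (hΔ₁ : ∀ lam, Δ₁ lam =
      U₁.app (X₁ lam) * (X₂ lam T).1 - U₁.app (X₂ lam) * (X₁ lam T).1)
    (hΔ₁₁ : ∀ lam, Δ₁₁ lam =
      U₁.app (X₁ lam) * (X₂ lam T).2 - U₁.app (X₂ lam) * (X₁ lam T).2) :
    Tendsto
      (fun lam : ℂ => 2 * Complex.I * Complex.exp (Complex.I * lam * (T : ℂ)) * Δ₁ lam)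
      (comap Complex.im atTop) (nhds (U₁.h₁ - Complex.I * U₁.h₂)) ∧
    Tendsto
      (fun lam : ℂ => 2 * Complex.exp (Complex.I * lam * (T : ℂ)) * Δ₁₁ lam)
      (comap Complex.im atTop) (nhds (U₁.h₁ - Complex.I * U₁.h₂)) := by
  have hwronskian : ∀ lam, (X₁ lam T).1 * (X₂ lam T).2 - (X₁ lam T).2 * (X₂ lam T).1 = 1 :=
    fun lam => by
      simpa [hX₁, hX₂] using
        (hX₁ lam).1.wronskian_eq hT.le hp hq (hX₂ lam).1 (right_mem_Icc.2 hT.le)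
  have hfst : ∀ lam, (X₂ lam T).1 • X₁ lam T - (X₁ lam T).1 • X₂ lam T = (0, -1) := fun lam => by
    ext
    · simp [mul_comm]
    · simpa [mul_comm, neg_eq_iff_eq_neg] using congrArg Neg.neg (hwronskian lam)
  have hsnd : ∀ lam, (X₂ lam T).2 • X₁ lam T - (X₁ lam T).2 • X₂ lam T = (1, 0) := fun lam => by
    ext
    · simpa [mul_comm] using hwronskian lam
    · simp [mul_comm]
  have hlim := fun {c d : ℂ → ℂ} {w : ℂ × ℂ} => U₁.tendsto_cexp_mul_app_mul_sub hT hp hq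
    (c := c) (d := d) (w := w) tendsto_comap (fun lam => (hX₁ lam).1) fun lam => (hX₂ lam).1
  constructor
  · convert (hlim hfst).const_mul (2 * Complex.I) using 2
    · rw [hΔ₁, ← mul_assoc]
    · linear_combination (U₁.h₁ - Complex.I * U₁.h₂) * Complex.I_sq
  · convert (hlim hsnd).const_mul 2 using 2
    · rw [hΔ₁₁, ← mul_assoc]
    · ring

/-- **Lemma 2, equations (19)**: for fixed `δ ∈ (0, π/2)`, as `|λ| → ∞` in the sector
`arg λ ∈ [δ, π−δ]`: `2i e^{iλT} Δ₁(λ) → h₁,₁ − i h₁,₂` and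
`2 e^{iλT} Δ₁₁(λ) → h₁,₁ − i h₁,₂`. -/
theorem statement15
    (T : ℝ) (hT : 0 < T)
    (p q : ℝ → ℂ) (hp : AbsContOn p T) (hq : AbsContOn q T)
    (U₁ : NonlocalForm T)
    (X₁ X₂ : ℂ → ℝ → ℂ × ℂ)
    (hX₁ : ∀ lam, IsDiracSol p q T lam (X₁ lam) ∧ X₁ lam 0 = (1, 0))
    (hX₂ : ∀ lam, IsDiracSol p q T lam (X₂ lam) ∧ X₂ lam 0 = (0, 1))
    (Δ₁ Δ₁₁ : ℂ → ℂ)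
    (hΔ₁ : ∀ lam, Δ₁ lam =
      U₁.app (X₁ lam) * (X₂ lam T).1 - U₁.app (X₂ lam) * (X₁ lam T).1)
    (hΔ₁₁ : ∀ lam, Δ₁₁ lam =
      U₁.app (X₁ lam) * (X₂ lam T).2 - U₁.app (X₂ lam) * (X₁ lam T).2)
    (δ : ℝ) (hδ : δ ∈ Ioo (0 : ℝ) (Real.pi / 2)) :
    Tendsto
      (fun lam : ℂ => 2 * Complex.I * Complex.exp (Complex.I * lam * (T : ℂ)) * Δ₁ lam)
      (sectorFilter δ) (nhds (U₁.h₁ - Complex.I * U₁.h₂)) ∧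
    Tendsto
      (fun lam : ℂ => 2 * Complex.exp (Complex.I * lam * (T : ℂ)) * Δ₁₁ lam)
      (sectorFilter δ) (nhds (U₁.h₁ - Complex.I * U₁.h₂)) := by
  have himp := sectorFilter_le_comap_im_atTop ⟨hδ.1, hδ.2.trans (half_lt_self Real.pi_pos)⟩
  exact (statement15_general T hT p q (hp.intervalIntegrable hT.le) (hq.intervalIntegrable hT.le)
    U₁ X₁ X₂ hX₁ hX₂ Δ₁ Δ₁₁ hΔ₁ hΔ₁₁).imp (·.mono_left himp) (·.mono_left himp)
end
end

section
/- Asymptotics of the backward solution in a sector (Lemma 2, equation (18)): Fix δ ∈ (0, π/2) and x ∈ [0,T). There exist C > 0 and R ≥ 1 such that for all λ with arg λ ∈ [δ, π−δ] and |λ| ≥ R: ‖2 e^{iλ(T−x)} Z₁(x,λ) − (1, −i)ᵀ‖ ≤ C/|λ|. -/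
open MeasureTheory Set Filter

noncomputable section

/-!
In the coordinates `U = e^{iλ(T-x)} (y₁ + i y₂)` and `V = e^{iλ(T-x)} (y₁ - i y₂)` the Dirac system
reads `U' = (q - i p) V`, `V' = -2iλ V + (q + i p) U`, and the final condition becomes
`U T = V T = 1`. As `Re (-2iλ) = 2 Im λ > 0`, the second equation damps `V` backward in `x`, so that
`|V x| ≤ e^{-2 Im λ (T-x)} + O(sup |U| / Im λ)`. Integrating the first equation turns this into
`U = 1 + O((1 + sup |U|) / Im λ)`, which for large `Im λ` bounds `sup |U|` and then gives
`U = 1 + O(1 / Im λ)` and, for fixed `x < T`, `V = O(1 / Im λ)`. In a sector `Im λ` is comparable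
to `|λ|`.
-/

section Calculus

variable {E : Type*} [NormedAddCommGroup E] [CompleteSpace E]

theorem AbsContOn.continuousOn {f : ℝ → ℂ} {T : ℝ} (hf : AbsContOn f T) :
    ContinuousOn f (Icc 0 T) := by
  obtain ⟨g, hg, hfg⟩ := hf
  have hprim : ContinuousOn (fun x ↦ ∫ t in (0 : ℝ)..x, g t) (Icc 0 T) :=
    (intervalIntegral.continuousOn_primitive_interval' hg left_mem_uIcc).mono Icc_subset_uIcc
  exact (continuousOn_const.add hprim).congr hfg

theorem hasDerivAt_of_eq_add_integral [NormedSpace ℝ E] {f g : ℝ → E} {a b t : ℝ}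
    (hg : ContinuousOn g (Icc a b))
    (hf : ∀ x ∈ Icc a b, f x = f a + ∫ s in a..x, g s) (ht : t ∈ Ioo a b) :
    HasDerivAt f (g t) t := by
  have hnhds : Icc a b ∈ nhds t := Icc_mem_nhds ht.1 ht.2
  have hprim : HasDerivAt (fun x ↦ ∫ s in a..x, g s) (g t) t :=
    intervalIntegral.integral_hasDerivAt_right
      ((hg.mono (Icc_subset_Icc_right ht.2.le)).intervalIntegrable_of_Icc ht.1.le)
      ((hg.mono Ioo_subset_Icc_self).stronglyMeasurableAtFilter isOpen_Ioo t ht)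
      (hg.continuousAt hnhds)
  refine (hprim.const_add (f a)).congr_of_eventuallyEq ?_
  filter_upwards [hnhds] with x hx using hf x hx

theorem integral_exp_neg_mul_le_inv {r : ℝ} (hr : 0 < r) (L : ℝ) :
    ∫ s in (0 : ℝ)..L, Real.exp (-(r * s)) ≤ r⁻¹ := by
  have hderiv (s : ℝ) :
      HasDerivAt (fun s ↦ -r⁻¹ * Real.exp (-(r * s))) (Real.exp (-(r * s))) s := by
    have h := (((hasDerivAt_id' s).const_mul r).fun_neg.exp).const_mul (-r⁻¹)
    exact h.congr_deriv (by field_simp)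
  rw [intervalIntegral.integral_eq_sub_of_hasDerivAt (fun s _ ↦ hderiv s)
    (Continuous.intervalIntegrable (by fun_prop) _ _)]
  have hpos : 0 < r⁻¹ * Real.exp (-(r * L)) := by positivity
  simp only [mul_zero, neg_zero, Real.exp_zero]
  linarith

theorem eq_exp_smul_sub_integral_of_hasDerivAt [NormedSpace ℂ E] {v g : ℝ → E} {κ : ℂ}
    {x b : ℝ} (hxb : x ≤ b) (hv : ContinuousOn v (Icc x b)) (hg : ContinuousOn g (Icc x b))
    (hderiv : ∀ t ∈ Ioo x b, HasDerivAt v (κ • v t + g t) t) :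
    v x = Complex.exp (-(κ * ((b - x : ℝ) : ℂ))) • v b -
      ∫ t in x..b, Complex.exp (-(κ * ((t - x : ℝ) : ℂ))) • g t := by
  set e : ℝ → ℂ := fun t ↦ Complex.exp (-(κ * ((t - x : ℝ) : ℂ))) with he
  have he_cont : ContinuousOn e (Icc x b) := by fun_prop
  have he_deriv (t : ℝ) : HasDerivAt e (-κ * e t) t := by
    have h := ((((hasDerivAt_id' t).sub_const x).ofReal_comp).const_mul κ).fun_neg.cexp
    exact h.congr_deriv (by simp [he, mul_comm])
  have hftc : ∫ t in x..b, e t • g t = e b • v b - e x • v x := by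
    refine intervalIntegral.integral_eq_sub_of_hasDerivAt_of_le hxb (he_cont.smul hv)
      (fun t ht ↦ ?_) ((he_cont.smul hg).intervalIntegrable_of_Icc hxb)
    refine ((he_deriv t).smul (hderiv t ht)).congr_deriv ?_
    module
  have hex : e x = 1 := by simp [he]
  rw [hftc, hex, one_smul, sub_sub_cancel]

theorem norm_le_exp_mul_add_div_of_hasDerivAt [NormedSpace ℂ E] {v g : ℝ → E} {κ : ℂ}
    {x b G : ℝ} (hκ : 0 < κ.re) (hxb : x ≤ b) (hv : ContinuousOn v (Icc x b))
    (hg : ContinuousOn g (Icc x b)) (hG : ∀ t ∈ Icc x b, ‖g t‖ ≤ G)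
    (hderiv : ∀ t ∈ Ioo x b, HasDerivAt v (κ • v t + g t) t) :
    ‖v x‖ ≤ Real.exp (-(κ.re * (b - x))) * ‖v b‖ + G / κ.re := by
  have hnorm (t : ℝ) :
      ‖Complex.exp (-(κ * ((t - x : ℝ) : ℂ)))‖ = Real.exp (-(κ.re * (t - x))) := by
    rw [Complex.norm_exp, Complex.neg_re, Complex.re_mul_ofReal]
  have hG₀ : 0 ≤ G := (norm_nonneg _).trans (hG x (left_mem_Icc.2 hxb))
  have hint : ‖∫ t in x..b, Complex.exp (-(κ * ((t - x : ℝ) : ℂ))) • g t‖ ≤ G / κ.re :=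
    calc ‖∫ t in x..b, Complex.exp (-(κ * ((t - x : ℝ) : ℂ))) • g t‖
        ≤ ∫ t in x..b, Real.exp (-(κ.re * (t - x))) * G := by
          refine intervalIntegral.norm_integral_le_of_norm_le hxb (.of_forall fun t ht ↦ ?_)
            (Continuous.intervalIntegrable (by fun_prop) _ _)
          rw [norm_smul, hnorm]
          gcongr
          exact hG t ⟨ht.1.le, ht.2⟩
      _ = (∫ s in (0 : ℝ)..b - x, Real.exp (-(κ.re * s))) * G := by
          rw [intervalIntegral.integral_mul_const,
            intervalIntegral.integral_comp_sub_right (fun s ↦ Real.exp (-(κ.re * s))), sub_self]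
      _ ≤ κ.re⁻¹ * G := by gcongr; exact integral_exp_neg_mul_le_inv hκ _
      _ = G / κ.re := by rw [div_eq_inv_mul]
  rw [eq_exp_smul_sub_integral_of_hasDerivAt hxb hv hg hderiv]
  refine (norm_sub_le _ _).trans ?_
  rw [norm_smul, hnorm]
  gcongr

end Calculus

/-- The linear system `U' = α V`, `V' = κ V + β U` on `[a, b]`, for functions continuous up to the
endpoints. The Dirac system takes this form after diagonalisation. -/
structure IsCoupledSol (α β : ℝ → ℂ) (κ : ℂ) (a b : ℝ) (U V : ℝ → ℂ) : Prop where
  continuousOn_fst : ContinuousOn U (Icc a b)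
  continuousOn_snd : ContinuousOn V (Icc a b)
  hasDerivAt_fst : ∀ t ∈ Ioo a b, HasDerivAt U (α t * V t) t
  hasDerivAt_snd : ∀ t ∈ Ioo a b, HasDerivAt V (κ * V t + β t * U t) t

namespace IsCoupledSol

variable {α β U V : ℝ → ℂ} {κ : ℂ} {a b A B N S x : ℝ}

theorem norm_snd_le (h : IsCoupledSol α β κ a b U V) (hκ : 0 < κ.re)
    (hβ : ContinuousOn β (Icc a b)) (hB : ∀ t ∈ Icc a b, ‖β t‖ ≤ B)
    (hS : ∀ t ∈ Icc a b, ‖U t‖ ≤ S) (hx : x ∈ Icc a b) :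
    ‖V x‖ ≤ Real.exp (-(κ.re * (b - x))) * ‖V b‖ + B * S / κ.re := by
  have hsub : Icc x b ⊆ Icc a b := Icc_subset_Icc_left hx.1
  refine norm_le_exp_mul_add_div_of_hasDerivAt hκ hx.2 (h.continuousOn_snd.mono hsub)
    ((hβ.mul h.continuousOn_fst).mono hsub) (fun t ht ↦ ?_)
    fun t ht ↦ h.hasDerivAt_snd t ⟨hx.1.trans_lt ht.1, ht.2⟩
  exact norm_mul_le_of_le (hB t (hsub ht)) (hS t (hsub ht))

theorem norm_fst_sub_le (h : IsCoupledSol α β κ a b U V) (hκ : 0 < κ.re)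
    (hα : ContinuousOn α (Icc a b)) (hA : ∀ t ∈ Icc a b, ‖α t‖ ≤ A)
    (hβ : ContinuousOn β (Icc a b)) (hB : ∀ t ∈ Icc a b, ‖β t‖ ≤ B)
    (hS : ∀ t ∈ Icc a b, ‖U t‖ ≤ S) (hx : x ∈ Icc a b) :
    ‖U x - U b‖ ≤ A * (‖V b‖ + B * S * (b - a)) / κ.re := by
  have hsub : Icc x b ⊆ Icc a b := Icc_subset_Icc_left hx.1
  have hA₀ : 0 ≤ A := (norm_nonneg _).trans (hA x hx)
  have hB₀ : 0 ≤ B := (norm_nonneg _).trans (hB x hx)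
  have hS₀ : 0 ≤ S := (norm_nonneg _).trans (hS x hx)
  have hftc : ∫ t in x..b, α t * V t = U b - U x :=
    intervalIntegral.integral_eq_sub_of_hasDerivAt_of_le hx.2 (h.continuousOn_fst.mono hsub)
      (fun t ht ↦ h.hasDerivAt_fst t ⟨hx.1.trans_lt ht.1, ht.2⟩)
      (((hα.mul h.continuousOn_snd).mono hsub).intervalIntegrable_of_Icc hx.2)
  have hexp : ∫ t in x..b, Real.exp (-(κ.re * (b - t))) ≤ κ.re⁻¹ := by
    rw [intervalIntegral.integral_comp_sub_left (fun s ↦ Real.exp (-(κ.re * s))), sub_self]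
    exact integral_exp_neg_mul_le_inv hκ _
  calc ‖U x - U b‖ = ‖∫ t in x..b, α t * V t‖ := by rw [hftc, norm_sub_rev]
    _ ≤ ∫ t in x..b, A * (Real.exp (-(κ.re * (b - t))) * ‖V b‖ + B * S / κ.re) := by
        refine intervalIntegral.norm_integral_le_of_norm_le hx.2 (.of_forall fun t ht ↦ ?_)
          (Continuous.intervalIntegrable (by fun_prop) _ _)
        have htab : t ∈ Icc a b := hsub ⟨ht.1.le, ht.2⟩
        exact norm_mul_le_of_le (hA t htab) (h.norm_snd_le hκ hβ hB hS htab)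
    _ = A * ((∫ t in x..b, Real.exp (-(κ.re * (b - t)))) * ‖V b‖ +
          (b - x) * (B * S / κ.re)) := by
        rw [intervalIntegral.integral_const_mul, intervalIntegral.integral_add
          (Continuous.intervalIntegrable (by fun_prop) _ _) intervalIntegrable_const,
          intervalIntegral.integral_mul_const, intervalIntegral.integral_const, smul_eq_mul]
    _ ≤ A * (κ.re⁻¹ * ‖V b‖ + (b - a) * (B * S / κ.re)) := by gcongr; exact hx.1
    _ = A * (‖V b‖ + B * S * (b - a)) / κ.re := by ring

theorem norm_fst_le_two_mul (h : IsCoupledSol α β κ a b U V) (hκ : 0 < κ.re)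
    (hα : ContinuousOn α (Icc a b)) (hA : ∀ t ∈ Icc a b, ‖α t‖ ≤ A)
    (hβ : ContinuousOn β (Icc a b)) (hB : ∀ t ∈ Icc a b, ‖β t‖ ≤ B)
    (hlarge : 2 * (A * (1 + B * (b - a))) ≤ κ.re) (hU : ‖U b‖ ≤ N) (hV : ‖V b‖ ≤ N)
    (hx : x ∈ Icc a b) : ‖U x‖ ≤ 2 * N := by
  obtain ⟨m, hm, hmax⟩ := isCompact_Icc.exists_isMaxOn ⟨x, hx⟩ h.continuousOn_fst.norm
  have hA₀ : 0 ≤ A := (norm_nonneg _).trans (hA x hx)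
  have hN₀ : 0 ≤ N := (norm_nonneg _).trans hU
  have hsup : ‖U m‖ ≤ N + A * (N + B * ‖U m‖ * (b - a)) / κ.re :=
    calc ‖U m‖ ≤ ‖U b‖ + ‖U m - U b‖ := norm_le_norm_add_norm_sub' _ _
      _ ≤ ‖U b‖ + A * (‖V b‖ + B * ‖U m‖ * (b - a)) / κ.re := by
          gcongr; exact h.norm_fst_sub_le hκ hα hA hβ hB (fun t ht ↦ hmax ht) hm
      _ ≤ N + A * (N + B * ‖U m‖ * (b - a)) / κ.re := by gcongr
  rw [← sub_le_iff_le_add', le_div_iff₀ hκ] at hsup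
  have habsorb : (κ.re - A * B * (b - a)) * ‖U m‖ ≤ (κ.re - A * B * (b - a)) * (2 * N) := by
    linarith [mul_le_mul_of_nonneg_right hlarge hN₀, mul_nonneg hA₀ hN₀]
  exact (hmax hx).trans (le_of_mul_le_mul_left habsorb (by linarith))

theorem norm_fst_sub_add_norm_snd_le (h : IsCoupledSol α β κ a b U V) (hκ : 0 < κ.re)
    (hα : ContinuousOn α (Icc a b)) (hA : ∀ t ∈ Icc a b, ‖α t‖ ≤ A)
    (hβ : ContinuousOn β (Icc a b)) (hB : ∀ t ∈ Icc a b, ‖β t‖ ≤ B)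
    (hlarge : 2 * (A * (1 + B * (b - a))) ≤ κ.re) (hU : ‖U b‖ ≤ N) (hV : ‖V b‖ ≤ N)
    (hx : x ∈ Ico a b) :
    ‖U x - U b‖ + ‖V x‖ ≤ N * ((b - x)⁻¹ + A * (1 + 2 * B * (b - a)) + 2 * B) / κ.re := by
  have hx' : x ∈ Icc a b := Ico_subset_Icc_self hx
  have hbx : 0 < b - x := sub_pos.2 hx.2
  have hA₀ : 0 ≤ A := (norm_nonneg _).trans (hA x hx')
  have hS : ∀ t ∈ Icc a b, ‖U t‖ ≤ 2 * N := fun t ht ↦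
    h.norm_fst_le_two_mul hκ hα hA hβ hB hlarge hU hV ht
  have hexp : Real.exp (-(κ.re * (b - x))) ≤ (κ.re * (b - x))⁻¹ := by
    rw [Real.exp_neg]
    gcongr
    linarith [Real.add_one_le_exp (κ.re * (b - x))]
  calc ‖U x - U b‖ + ‖V x‖
      ≤ A * (‖V b‖ + B * (2 * N) * (b - a)) / κ.re +
          (Real.exp (-(κ.re * (b - x))) * ‖V b‖ + B * (2 * N) / κ.re) :=
        add_le_add (h.norm_fst_sub_le hκ hα hA hβ hB hS hx') (h.norm_snd_le hκ hβ hB hS hx')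
    _ ≤ A * (N + B * (2 * N) * (b - a)) / κ.re +
          ((κ.re * (b - x))⁻¹ * N + B * (2 * N) / κ.re) := by gcongr
    _ = N * ((b - x)⁻¹ + A * (1 + 2 * B * (b - a)) + 2 * B) / κ.re := by
        rw [mul_inv]
        ring

end IsCoupledSol

/-- The mode `U = e^{iλ(T-x)} (y₁ + i y₂)` of a Dirac solution. For `Ω = 0` it is constant. -/
def slowMode (T : ℝ) (lam : ℂ) (y : ℝ → ℂ × ℂ) (x : ℝ) : ℂ :=
  Complex.exp (Complex.I * lam * ((T - x : ℝ) : ℂ)) * ((y x).1 + Complex.I * (y x).2)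

/-- The mode `V = e^{iλ(T-x)} (y₁ - i y₂)` of a Dirac solution. For `Ω = 0` it is a multiple of
`e^{-2iλx}`. -/
def fastMode (T : ℝ) (lam : ℂ) (y : ℝ → ℂ × ℂ) (x : ℝ) : ℂ :=
  Complex.exp (Complex.I * lam * ((T - x : ℝ) : ℂ)) * ((y x).1 - Complex.I * (y x).2)

theorem norm_two_mul_exp_smul_sub_le (T : ℝ) (lam : ℂ) (y : ℝ → ℂ × ℂ) (x : ℝ) :
    ‖(2 * Complex.exp (Complex.I * lam * ((T - x : ℝ) : ℂ))) • y x - ((1 : ℂ), -Complex.I)‖ ≤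
      ‖slowMode T lam y x - 1‖ + ‖fastMode T lam y x‖ := by
  have hmodes : (2 * Complex.exp (Complex.I * lam * ((T - x : ℝ) : ℂ))) • y x -
        ((1 : ℂ), -Complex.I) =
      ((slowMode T lam y x - 1) + fastMode T lam y x,
        -Complex.I * ((slowMode T lam y x - 1) - fastMode T lam y x)) := by
    unfold slowMode fastMode
    ext
    · simp only [Prod.fst_sub, Prod.smul_fst, smul_eq_mul]
      ring
    · simp only [Prod.snd_sub, Prod.smul_snd, smul_eq_mul]
      linear_combination
        2 * Complex.exp (Complex.I * lam * ((T - x : ℝ) : ℂ)) * (y x).2 * Complex.I_mul_I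
  rw [hmodes, Prod.norm_mk, norm_mul, norm_neg, Complex.norm_I, one_mul]
  exact max_le (norm_add_le _ _) (norm_sub_le _ _)

namespace IsDiracSol

variable {p q : ℝ → ℂ} {T t : ℝ} {lam : ℂ} {y : ℝ → ℂ × ℂ}

theorem hasDerivAt_fst (hy : IsDiracSol p q T lam y) (hp : ContinuousOn p (Icc 0 T))
    (hq : ContinuousOn q (Icc 0 T)) (ht : t ∈ Ioo 0 T) :
    HasDerivAt (fun s ↦ (y s).1) (q t * (y t).1 - (p t + lam) * (y t).2) t := by
  have hy₁ := hy.1.fst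
  have hy₂ := hy.1.snd
  exact hasDerivAt_of_eq_add_integral (f := fun s ↦ (y s).1)
    (g := fun s ↦ q s * (y s).1 - (p s + lam) * (y s).2) (by fun_prop)
    (fun s hs ↦ (hy.2 s hs).1) ht

theorem hasDerivAt_snd (hy : IsDiracSol p q T lam y) (hp : ContinuousOn p (Icc 0 T))
    (hq : ContinuousOn q (Icc 0 T)) (ht : t ∈ Ioo 0 T) :
    HasDerivAt (fun s ↦ (y s).2) ((lam - p t) * (y t).1 - q t * (y t).2) t := by
  have hy₁ := hy.1.fst
  have hy₂ := hy.1.snd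
  exact hasDerivAt_of_eq_add_integral (f := fun s ↦ (y s).2)
    (g := fun s ↦ (lam - p s) * (y s).1 - q s * (y s).2) (by fun_prop)
    (fun s hs ↦ (hy.2 s hs).2) ht

theorem isCoupledSol_modes (hy : IsDiracSol p q T lam y) (hp : ContinuousOn p (Icc 0 T))
    (hq : ContinuousOn q (Icc 0 T)) :
    IsCoupledSol (fun t ↦ q t - Complex.I * p t) (fun t ↦ q t + Complex.I * p t)
      (-2 * Complex.I * lam) 0 T (slowMode T lam y) (fastMode T lam y) := by
  set e : ℝ → ℂ := fun t ↦ Complex.exp (Complex.I * lam * ((T - t : ℝ) : ℂ)) with he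
  have he_cont : ContinuousOn e (Icc 0 T) := by fun_prop
  have he_deriv (t : ℝ) : HasDerivAt e (-(Complex.I * lam) * e t) t := by
    have h := ((((hasDerivAt_id' t).const_sub T).ofReal_comp).const_mul (Complex.I * lam)).cexp
    exact h.congr_deriv (by simp [he, mul_comm])
  have hy₁ := hy.1.fst
  have hy₂ := hy.1.snd
  refine ⟨he_cont.mul (hy₁.add (hy₂.const_mul _)), he_cont.mul (hy₁.sub (hy₂.const_mul _)),
    fun t ht ↦ ?_, fun t ht ↦ ?_⟩
  · refine ((he_deriv t).mul ((hy.hasDerivAt_fst hp hq ht).add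
      ((hy.hasDerivAt_snd hp hq ht).const_mul Complex.I))).congr_deriv ?_
    simp only [fastMode, Pi.add_apply, he]
    linear_combination -(e t * (p t + lam) * (y t).2) * Complex.I_mul_I
  · refine ((he_deriv t).mul ((hy.hasDerivAt_fst hp hq ht).sub
      ((hy.hasDerivAt_snd hp hq ht).const_mul Complex.I))).congr_deriv ?_
    simp only [slowMode, fastMode, Pi.sub_apply, he]
    linear_combination -(e t * (p t + lam) * (y t).2) * Complex.I_mul_I

end IsDiracSol

theorem norm_mul_sin_le_im {δ : ℝ} {z : ℂ} (hδ : -(Real.pi / 2) ≤ δ)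
    (hz : z.arg ∈ Icc δ (Real.pi - δ)) : ‖z‖ * Real.sin δ ≤ z.im := by
  have hsin : Real.sin δ ≤ Real.sin z.arg := by
    rcases le_total z.arg (Real.pi / 2) with hle | hge
    · exact Real.sin_le_sin_of_le_of_le_pi_div_two hδ hle hz.1
    · rw [← Real.sin_pi_sub z.arg]
      exact Real.sin_le_sin_of_le_of_le_pi_div_two hδ (by linarith) (by linarith [hz.2])
  rw [← Complex.norm_mul_sin_arg z]
  gcongr

theorem exists_sector_bound_of_exists_im_bound {F : ℂ → ℝ} {δ : ℝ} (hδ : δ ∈ Ioo 0 Real.pi)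
    (hF : ∃ C > (0 : ℝ), ∃ R : ℝ, 1 ≤ R ∧ ∀ z : ℂ, R ≤ z.im → F z ≤ C / z.im) :
    ∃ C > (0 : ℝ), ∃ R : ℝ, 1 ≤ R ∧
      ∀ z : ℂ, z.arg ∈ Icc δ (Real.pi - δ) → R ≤ ‖z‖ → F z ≤ C / ‖z‖ := by
  obtain ⟨C, hC, R, hR, hF⟩ := hF
  have hsin : 0 < Real.sin δ := Real.sin_pos_of_mem_Ioo hδ
  refine ⟨C / Real.sin δ, by positivity, R / Real.sin δ, ?_, fun z harg hz ↦ ?_⟩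
  · exact (one_le_div hsin).2 ((Real.sin_le_one δ).trans hR)
  have him : ‖z‖ * Real.sin δ ≤ z.im :=
    norm_mul_sin_le_im (by linarith [hδ.1, Real.pi_pos]) harg
  have hzR : R ≤ ‖z‖ * Real.sin δ := (div_le_iff₀ hsin).1 hz
  calc F z ≤ C / z.im := hF z (hzR.trans him)
    _ ≤ C / (‖z‖ * Real.sin δ) := div_le_div_of_nonneg_left hC.le (by linarith) him
    _ = C / Real.sin δ / ‖z‖ := by rw [div_div, mul_comm]

theorem statement16_general {T : ℝ} {p q : ℝ → ℂ} (hp : ContinuousOn p (Icc 0 T))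
    (hq : ContinuousOn q (Icc 0 T)) {Z₁ : ℂ → ℝ → ℂ × ℂ}
    (hZ₁ : ∀ lam, IsDiracSol p q T lam (Z₁ lam) ∧ Z₁ lam T = (1, 0)) {x : ℝ}
    (hx : x ∈ Ico 0 T) :
    ∃ C > (0 : ℝ), ∃ R : ℝ, 1 ≤ R ∧ ∀ lam : ℂ, R ≤ lam.im →
      ‖(2 * Complex.exp (Complex.I * lam * ((T - x : ℝ) : ℂ))) • Z₁ lam x -
        ((1 : ℂ), -Complex.I)‖ ≤ C / lam.im := by
  have hα : ContinuousOn (fun t ↦ q t - Complex.I * p t) (Icc 0 T) := by fun_prop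
  have hβ : ContinuousOn (fun t ↦ q t + Complex.I * p t) (Icc 0 T) := by fun_prop
  obtain ⟨A, hA⟩ := isCompact_Icc.exists_bound_of_continuousOn hα
  obtain ⟨B, hB⟩ := isCompact_Icc.exists_bound_of_continuousOn hβ
  have hA₀ : 0 ≤ A := (norm_nonneg _).trans (hA x (Ico_subset_Icc_self hx))
  have hB₀ : 0 ≤ B := (norm_nonneg _).trans (hB x (Ico_subset_Icc_self hx))
  have hTx : 0 < T - x := sub_pos.2 hx.2
  have hT : 0 < T := hx.1.trans_lt hx.2
  refine ⟨((T - x)⁻¹ + A * (1 + 2 * B * T) + 2 * B) / 2, by positivity,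
    max 1 (A * (1 + B * T)), le_max_left _ _, fun lam hlam ↦ ?_⟩
  obtain ⟨hone, hlarge⟩ := max_le_iff.1 hlam
  have hre : (-2 * Complex.I * lam).re = 2 * lam.im := by simp
  have hU : slowMode T lam (Z₁ lam) T = 1 := by simp [slowMode, (hZ₁ lam).2]
  have hV : fastMode T lam (Z₁ lam) T = 1 := by simp [fastMode, (hZ₁ lam).2]
  have hmodes := ((hZ₁ lam).1.isCoupledSol_modes hp hq).norm_fst_sub_add_norm_snd_le (N := 1)
    (by linarith) hα hA hβ hB (by rw [hre, sub_zero]; linarith) (by simp [hU]) (by simp [hV]) hx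
  rw [hU, hre, sub_zero, one_mul, ← div_div] at hmodes
  exact (norm_two_mul_exp_smul_sub_le T lam (Z₁ lam) x).trans hmodes

/-- **Lemma 2, equation (18)**: for fixed `δ ∈ (0, π/2)` and `x ∈ [0,T)` there are
`C > 0` and `R ≥ 1` such that for `arg λ ∈ [δ, π−δ]` and `|λ| ≥ R`:
`‖2 e^{iλ(T−x)} Z₁(x,λ) − (1, −i)ᵀ‖ ≤ C/|λ|`. -/
theorem statement16
    (T : ℝ) (hT : 0 < T)
    (p q : ℝ → ℂ) (hp : AbsContOn p T) (hq : AbsContOn q T)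
    (Z₁ : ℂ → ℝ → ℂ × ℂ)
    (hZ₁ : ∀ lam, IsDiracSol p q T lam (Z₁ lam) ∧ Z₁ lam T = (1, 0))
    (δ : ℝ) (hδ : δ ∈ Ioo (0 : ℝ) (Real.pi / 2))
    (x : ℝ) (hx : x ∈ Ico (0 : ℝ) T) :
    ∃ C > (0 : ℝ), ∃ R : ℝ, 1 ≤ R ∧
      ∀ lam : ℂ, Complex.arg lam ∈ Icc δ (Real.pi - δ) → R ≤ ‖lam‖ →
        ‖(2 * Complex.exp (Complex.I * lam * ((T - x : ℝ) : ℂ))) • Z₁ lam x -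
            ((1 : ℂ), -Complex.I)‖ ≤ C / ‖lam‖ := by
  have hδπ : δ ∈ Ioo 0 Real.pi := ⟨hδ.1, hδ.2.trans (half_lt_self Real.pi_pos)⟩
  exact exists_sector_bound_of_exists_im_bound hδπ
    (statement16_general hp.continuousOn hq.continuousOn hZ₁ hx)
end
end

section
/- Uniqueness step via Hadamard factorization: Let h : ℂ → ℂ be an entire function with h(λ) ≠ 0 for all λ ∈ ℂ, of exponential type, i.e., there exist constants C, A > 0 with |h(λ)| ≤ C e^{A|λ|} for all λ. If h(it) → 1 as t → +∞ along the positive imaginary axis (t real, t → +∞), then h(λ) = 1 for all λ ∈ ℂ. (Consequently, two entire functions of exponential type with the same zeros counted with multiplicity whose quotient tends to 1 along the positive imaginary axis are identical.) -/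
open Filter

/-!
A zero-free entire function `h` of finite order has an entire logarithm whose real part grows
polynomially, so by Borel–Carathéodory and Cauchy's estimates `h = exp P` for a polynomial `P`.
If `h` converges to a nonzero limit along a curve escaping to infinity, then `P` converges along
that curve as well, because `exp` is a covering map of `ℂ ∖ {0}`. A nonconstant polynomial is
unbounded along every such curve, so `P` and hence `h` are constant.
-/

open Asymptotics Bornology Complex Polynomial Topology

/-- Entire functions of finite order: `f` grows at most like `exp (A * ‖z‖ ^ n)` for some
exponent `n`. Natural exponents suffice, since any real exponent may be rounded up. -/
def HasFiniteOrder (f : ℂ → ℂ) : Prop :=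
  ∃ (n : ℕ) (C A : ℝ), ∀ z, ‖f z‖ ≤ C * Real.exp (A * ‖z‖ ^ n)

theorem exists_differentiable_cexp_eq {h : ℂ → ℂ} (hdiff : Differentiable ℂ h)
    (hne : ∀ z, h z ≠ 0) : ∃ g : ℂ → ℂ, Differentiable ℂ g ∧ ∀ z, h z = cexp (g z) := by
  have hlogDeriv : Differentiable ℂ fun z => deriv h z / h z := hdiff.deriv.div hdiff hne
  obtain ⟨g, hg₀, hg⟩ := hlogDeriv.isExactOn_univ.with_val_at 0 (log (h 0))
  replace hg (z : ℂ) : HasDerivAt g (deriv h z / h z) z := hg z (Set.mem_univ z)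
  have hquot (z : ℂ) : HasDerivAt (fun z => h z / cexp (g z)) 0 z := by
    refine ((hdiff z).hasDerivAt.div (hg z).cexp (exp_ne_zero _)).congr_deriv ?_
    field_simp [hne z]
    simp
  refine ⟨g, fun z => (hg z).differentiableAt, fun z => ?_⟩
  have hconst : h z / cexp (g z) = h 0 / cexp (g 0) :=
    is_const_of_deriv_eq_zero (fun w => (hquot w).differentiableAt) (fun w => (hquot w).deriv) z 0
  rwa [hg₀, exp_log (hne 0), div_self (hne 0), div_eq_one_iff_eq (exp_ne_zero _)] at hconst

theorem isBigO_pow_of_re_le {g : ℂ → ℂ} {n : ℕ} {A B : ℝ} (hg : Differentiable ℂ g)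
    (hre : ∀ z, (g z).re ≤ B + A * ‖z‖ ^ n) :
    g =O[cobounded ℂ] fun z => ‖z‖ ^ n := by
  refine .of_bound (2 * (|B| + 1 + |A| * 2 ^ n) + 3 * ‖g 0‖) ?_
  filter_upwards [tendsto_norm_cobounded_atTop.eventually_ge_atTop 1] with z hz
  set M : ℝ := |B| + 1 + |A| * (2 * ‖z‖) ^ n with hM
  have hre_ball : Set.MapsTo g (Metric.ball 0 (2 * ‖z‖)) {w | w.re ≤ M} := fun w hw => by
    have hw : ‖w‖ ≤ 2 * ‖z‖ := (mem_ball_zero_iff.mp hw).le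
    calc (g w).re ≤ B + A * ‖w‖ ^ n := hre w
      _ ≤ |B| + |A| * (2 * ‖z‖) ^ n := by gcongr <;> exact le_abs_self _
      _ ≤ M := by linarith
  have hpow : 1 ≤ ‖z‖ ^ n := one_le_pow₀ hz
  calc ‖g z‖ ≤ 2 * M * ‖z‖ / (2 * ‖z‖ - ‖z‖) + ‖g 0‖ * (2 * ‖z‖ + ‖z‖) / (2 * ‖z‖ - ‖z‖) :=
        borelCaratheodory (by positivity) hg.differentiableOn hre_ball (by linarith)
          (mem_ball_zero_iff.mpr (by linarith))
    _ = 2 * (|B| + 1) + 3 * ‖g 0‖ + 2 * |A| * 2 ^ n * ‖z‖ ^ n := by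
        rw [hM, show 2 * ‖z‖ - ‖z‖ = ‖z‖ by ring, mul_pow]
        field_simp
        ring
    _ ≤ (2 * (|B| + 1) + 3 * ‖g 0‖) * ‖z‖ ^ n + 2 * |A| * 2 ^ n * ‖z‖ ^ n := by
        gcongr
        exact le_mul_of_one_le_right (by positivity) hpow
    _ = (2 * (|B| + 1 + |A| * 2 ^ n) + 3 * ‖g 0‖) * ‖‖z‖ ^ n‖ := by
        rw [norm_pow, norm_norm]
        ring

theorem iteratedDeriv_zero_eq_zero_of_isBigO_pow {E : Type*} [NormedAddCommGroup E]
    [NormedSpace ℂ E] [CompleteSpace E] {f : ℂ → E} {m n : ℕ} (hf : Differentiable ℂ f)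
    (hgrowth : f =O[cobounded ℂ] fun z => ‖z‖ ^ n) (hnm : n < m) :
    iteratedDeriv m f 0 = 0 := by
  obtain ⟨K, hK⟩ := hgrowth.bound
  obtain ⟨r, -, hr⟩ := hasBasis_cobounded_norm.eventually_iff.mp hK
  have hcauchy : ∀ᶠ R : ℝ in atTop,
      ‖iteratedDeriv m f 0‖ ≤ m.factorial * K * (R ^ n / R ^ m) := by
    filter_upwards [eventually_ge_atTop r, eventually_gt_atTop 0] with R hrR hR
    rw [← mul_div_assoc, mul_assoc]
    refine norm_iteratedDeriv_le_of_forall_mem_sphere_norm_le m hR hf.diffContOnCl fun z hz => ?_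
    have hzR : ‖z‖ = R := mem_sphere_zero_iff_norm.mp hz
    simpa [hzR, abs_of_pos hR] using hr (hrR.trans_eq hzR.symm)
  have hzero : Tendsto (fun R : ℝ => m.factorial * K * (R ^ n / R ^ m)) atTop (𝓝 0) := by
    simpa only [mul_zero] using
      (isLittleO_pow_pow_atTop_of_lt (𝕜 := ℝ) hnm).tendsto_div_nhds_zero.const_mul
        (m.factorial * K)
  exact norm_le_zero_iff.mp (ge_of_tendsto hzero hcauchy)

theorem exists_polynomial_eval_eq_of_isBigO_pow {f : ℂ → ℂ} {n : ℕ} (hf : Differentiable ℂ f)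
    (hgrowth : f =O[cobounded ℂ] fun z => ‖z‖ ^ n) :
    ∃ P : ℂ[X], ∀ z, f z = P.eval z := by
  refine ⟨∑ m ∈ Finset.range (n + 1), C ((m.factorial : ℂ)⁻¹ * iteratedDeriv m f 0) * X ^ m,
    fun z => ?_⟩
  have hcoeff : ∀ m ∉ Finset.range (n + 1),
      (m.factorial : ℂ)⁻¹ * iteratedDeriv m f 0 * (z - 0) ^ m = 0 := fun m hm => by
    have hnm : n < m := by simpa [Nat.lt_succ_iff] using hm
    rw [iteratedDeriv_zero_eq_zero_of_isBigO_pow hf hgrowth hnm, mul_zero, zero_mul]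
  rw [← taylorSeries_eq_of_entire' 0 z hf, tsum_eq_sum hcoeff]
  simp [eval_finsetSum]

theorem HasFiniteOrder.exists_polynomial_cexp_eq {h : ℂ → ℂ} (hord : HasFiniteOrder h)
    (hdiff : Differentiable ℂ h) (hne : ∀ z, h z ≠ 0) :
    ∃ P : ℂ[X], ∀ z, h z = cexp (P.eval z) := by
  obtain ⟨n, C, A, hbound⟩ := hord
  obtain ⟨g, hg, hexp⟩ := exists_differentiable_cexp_eq hdiff hne
  have hC : 0 < C :=
    pos_of_mul_pos_left ((norm_pos_iff.mpr (hne 0)).trans_le (hbound 0)) (Real.exp_pos _).le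
  have hre (z : ℂ) : (g z).re ≤ Real.log C + A * ‖z‖ ^ n := by
    rw [← Real.exp_le_exp, Real.exp_add, Real.exp_log hC, ← norm_exp, ← hexp]
    exact hbound z
  obtain ⟨P, hP⟩ := exists_polynomial_eval_eq_of_isBigO_pow hg (isBigO_pow_of_re_le hg hre)
  exact ⟨P, fun z => by rw [hexp, hP]⟩

theorem exists_tendsto_of_tendsto_cexp {f : ℝ → ℂ} {c : ℂ} (hf : Continuous f) (hc : c ≠ 0)
    (hlim : Tendsto (fun t => cexp (f t)) atTop (𝓝 c)) : ∃ a, Tendsto f atTop (𝓝 a) := by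
  have hratio : Tendsto (fun t => cexp (f t) / c) atTop (𝓝 1) := by
    simpa only [div_self hc] using hlim.div_const c
  obtain ⟨T, hT⟩ := eventually_atTop.mp
    (hratio.eventually_mem (isOpen_slitPlane.mem_nhds one_mem_slitPlane))
  set ℓ : ℝ → ℂ := fun t => log (cexp (f t) / c)
  have hℓ : Tendsto ℓ atTop (𝓝 0) := by simpa only [log_one] using hratio.clog one_mem_slitPlane
  have hcont : ContinuousOn (fun t => f t - ℓ t) (Set.Ici T) :=
    hf.continuousOn.sub (ContinuousOn.clog (by fun_prop) hT)
  have hexp (t : ℝ) : cexp (f t - ℓ t) = c := by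
    rw [exp_sub, exp_log (div_ne_zero (exp_ne_zero _) hc), div_div_cancel₀ (exp_ne_zero _)]
  have hconst : ∀ t ≥ T, f t - ℓ t = f T - ℓ T := fun t ht =>
    isCoveringMap_exp.constOn_of_comp isPreconnected_Ici hcont
      (fun s _ s' _ => Subtype.ext ((hexp s).trans (hexp s').symm)) ht Set.self_mem_Ici
  refine ⟨f T - ℓ T, ?_⟩
  have hsum : Tendsto (fun t => f T - ℓ T + ℓ t) atTop (𝓝 (f T - ℓ T)) := by
    simpa only [add_zero] using hℓ.const_add (f T - ℓ T)
  refine hsum.congr' ?_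
  filter_upwards [eventually_ge_atTop T] with t ht
  rw [← hconst t ht, sub_add_cancel]

theorem polynomial_eq_C_of_tendsto_of_tendsto_cobounded {𝕜 α : Type*} [NormedField 𝕜]
    {l : Filter α} [l.NeBot] {P : 𝕜[X]} {γ : α → 𝕜} {a : 𝕜} (hγ : Tendsto γ l (cobounded 𝕜))
    (hlim : Tendsto (fun t => P.eval (γ t)) l (𝓝 a)) : P = C a := by
  have hdeg : P.degree ≤ 0 := by
    by_contra! hpos
    exact not_tendsto_nhds_of_tendsto_atTop
      (P.tendsto_norm_atTop hpos (tendsto_norm_cobounded_atTop.comp hγ)) _ hlim.norm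
  rw [eq_C_of_degree_le_zero hdeg] at hlim ⊢
  simp only [eval_C] at hlim
  rw [tendsto_nhds_unique tendsto_const_nhds hlim]

theorem statement19_general {h : ℂ → ℂ} {γ : ℝ → ℂ} {c : ℂ} (hdiff : Differentiable ℂ h)
    (hne : ∀ z, h z ≠ 0) (hord : HasFiniteOrder h) (hγ : Continuous γ)
    (hγ_cobounded : Tendsto γ atTop (cobounded ℂ)) (hc : c ≠ 0)
    (hlim : Tendsto (fun t => h (γ t)) atTop (𝓝 c)) (z : ℂ) : h z = c := by
  obtain ⟨P, hP⟩ := hord.exists_polynomial_cexp_eq hdiff hne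
  obtain ⟨a, ha⟩ : ∃ a, Tendsto (fun t => P.eval (γ t)) atTop (𝓝 a) :=
    exists_tendsto_of_tendsto_cexp (P.continuous.comp hγ) hc (by simpa only [hP] using hlim)
  have hconst (w : ℂ) : h w = cexp a := by
    rw [hP, polynomial_eq_C_of_tendsto_of_tendsto_cobounded hγ_cobounded ha, eval_C]
  simp only [hconst] at hlim ⊢
  exact tendsto_nhds_unique tendsto_const_nhds hlim

theorem tendsto_ofReal_mul_I_cobounded :
    Tendsto (fun t : ℝ => (t : ℂ) * I) atTop (cobounded ℂ) := by
  simpa [← tendsto_norm_atTop_iff_cobounded] using tendsto_abs_atTop_atTop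

/-- **Uniqueness step via Hadamard factorization**: a non-vanishing entire function of
exponential type that tends to `1` along the positive imaginary axis is identically `1`. -/
theorem statement19
    (h : ℂ → ℂ)
    (hdiff : Differentiable ℂ h)
    (hne : ∀ z : ℂ, h z ≠ 0)
    (hgrowth : ∃ C A : ℝ, 0 < C ∧ 0 < A ∧ ∀ z : ℂ, ‖h z‖ ≤ C * Real.exp (A * ‖z‖))
    (hlim : Tendsto (fun t : ℝ => h ((t : ℂ) * Complex.I)) atTop (nhds 1)) :
    ∀ z : ℂ, h z = 1 := by
  obtain ⟨C, A, -, -, hbound⟩ := hgrowth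
  have hord : HasFiniteOrder h := ⟨1, C, A, by simpa only [pow_one] using hbound⟩
  exact statement19_general hdiff hne hord (by fun_prop) tendsto_ofReal_mul_I_cobounded
    one_ne_zero hlim
end
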